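/- arXiv:1501.01489 — 4 statements merged into one kernel-verified Lean document; each statement's English description precedes it below -/
import Mathlib

section
/- Let C_n be a chord diagram chosen uniformly at random from all chord diagrams of size n, let c_1 be the chord of C_n containing the endpoint 1, and let deg(c_1) be its degree. Then for every constant b with 0 ≤ b ≤ 1/2, lim_{n→∞} P(deg(c_1) ≤ b·n) = 1 − √(1 − 2b). In other words, deg(c_1)/n converges in distribution to the random variable on [0,1/2] with density (1−2x)^{−1/2}. -/
open scoped Classical
open Finset Filter

/-- A chord diagram of size `n`: a fixed-point-free involution of the `2n`
endpoints `0, 1, …, 2n-1` (endpoint `i` here corresponds to the label `i+1`). -/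
abbrev ChordDiagram (n : ℕ) :=
  {f : Fin (2*n) → Fin (2*n) // (∀ i, f (f i) = i) ∧ ∀ i, f i ≠ i}

/-- `c` lies strictly between `a` and `b`. -/
def Between {m : ℕ} (a b c : Fin m) : Prop := min a b < c ∧ c < max a b

/-- The chord of `C` containing endpoint `x` crosses the chord containing endpoint `u`:
exactly one of the two endpoints `u`, `C u` lies strictly between `x` and `C x`. -/
def Crosses {n : ℕ} (C : ChordDiagram n) (x u : Fin (2*n)) : Prop :=
  Xor' (Between x (C.1 x) u) (Between x (C.1 x) (C.1 u))

/-- Uniform probability of an event over all chord diagrams of size `n`. -/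
noncomputable def prob (n : ℕ) (E : ChordDiagram n → Prop) : ℝ :=
  ((Finset.univ.filter E).card : ℝ) / ((Finset.univ : Finset (ChordDiagram n)).card : ℝ)

/-- The degree of the chord of `C` containing endpoint `x`: the number of chords
crossing it (each chord counted once via its smaller endpoint). -/
noncomputable def chordDegree {n : ℕ} (C : ChordDiagram n) (x : Fin (2*n)) : ℕ :=
  (Finset.univ.filter fun u => u < C.1 u ∧ Crosses C x u).card

/-- The length of the chord of `C` containing endpoint `x`: the number of endpoints
on the smaller of the two arcs it determines. -/
def chordLength {n : ℕ} (C : ChordDiagram n) (x : Fin (2*n)) : ℕ :=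
  min (max (x:ℕ) (C.1 x : ℕ) - min (x:ℕ) (C.1 x : ℕ) - 1)
      (2*n - (max (x:ℕ) (C.1 x : ℕ) - min (x:ℕ) (C.1 x : ℕ)) - 1)

/-- Degree of the chord containing endpoint `1` (index `0`). -/
noncomputable def degreeC1 (n : ℕ) (C : ChordDiagram n) : ℕ :=
  if h : 0 < n then chordDegree C ⟨0, by omega⟩ else 0

/-- Length of the chord containing endpoint `1` (index `0`). -/
noncomputable def lengthC1 (n : ℕ) (C : ChordDiagram n) : ℕ :=
  if h : 0 < n then chordLength C ⟨0, by omega⟩ else 0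

/-- Membership in the component (w.r.t. the crossing relation) of the chord
containing the root endpoint. -/
def InRootComponent {n : ℕ} (C : ChordDiagram n) (root x : Fin (2*n)) : Prop :=
  x = root ∨ x = C.1 root ∨ Relation.ReflTransGen (fun a b => Crosses C a b) root x

/-- The chord containing `x` is simple: it joins two (cyclically) consecutive endpoints. -/
def IsSimple {n : ℕ} (C : ChordDiagram n) (x : Fin (2*n)) : Prop :=
  (C.1 x : ℕ) = ((x : ℕ) + 1) % (2*n) ∨ (x : ℕ) = ((C.1 x : ℕ) + 1) % (2*n)

/-- `C` is monolithic (with respect to `root`): every chord not in the root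
component is simple, and no two simple chords are next to each other. -/
def Monolithic {n : ℕ} (C : ChordDiagram n) (root : Fin (2*n)) : Prop :=
  (∀ x : Fin (2*n), ¬ InRootComponent C root x → IsSimple C x) ∧
  ¬ ∃ i : Fin (2*n), (C.1 i : ℕ) = ((i : ℕ) + 1) % (2*n) ∧
      ∃ j : Fin (2*n), (j : ℕ) = ((i : ℕ) + 2) % (2*n) ∧ (C.1 j : ℕ) = ((i : ℕ) + 3) % (2*n)

/-- `L_j`: the number of chords of length `j` in `C`. -/
noncomputable def lengthCount (n : ℕ) (j : ℕ) (C : ChordDiagram n) : ℕ :=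
  (Finset.univ.filter fun x : Fin (2*n) => x < C.1 x ∧ chordLength C x = j).card

/-- The endpoints of chords of `C` of length at least `k`. -/
noncomputable def lenAtLeast (n k : ℕ) (C : ChordDiagram n) : Finset (Fin (2*n)) :=
  Finset.univ.filter fun x => k ≤ chordLength C x

/-- The number of chords with endpoints in `S` crossing the chord containing `x`. -/
noncomputable def degreeIn {n : ℕ} (C : ChordDiagram n) (S : Finset (Fin (2*n)))
    (x : Fin (2*n)) : ℕ :=
  (S.filter fun u => u < C.1 u ∧ Crosses C x u).card

/-- `S` (a chord-closed set of endpoints) is a set of chords each crossing at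
least `k` other chords of `S`. -/
def IsCore {n : ℕ} (C : ChordDiagram n) (k : ℕ) (S : Finset (Fin (2*n))) : Prop :=
  (∀ x ∈ S, C.1 x ∈ S) ∧ ∀ x ∈ S, k ≤ degreeIn C S x

/-- The `k`-core: the union of all sets of chords in which every chord crosses
at least `k` other chords of the set. -/
noncomputable def kCore (n k : ℕ) (C : ChordDiagram n) : Finset (Fin (2*n)) :=
  Finset.univ.filter fun x => ∃ S : Finset (Fin (2*n)), IsCore C k S ∧ x ∈ S

/-- The number of chords in the `k`-core of `C`. -/
noncomputable def kCoreSize (n k : ℕ) (C : ChordDiagram n) : ℕ :=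
  ((kCore n k C).filter fun x => x < C.1 x).card

/-- `Z_k`: the number of chords of length strictly less than `k`. -/
noncomputable def shortCount (n k : ℕ) (C : ChordDiagram n) : ℕ :=
  (Finset.univ.filter fun x : Fin (2*n) => x < C.1 x ∧ chordLength C x < k).card

/-- `C` contains a balanced clique of size `m`: a set of `m` pairwise crossing
chords with exactly one endpoint in each of the `2m` blocks of length `⌊n/m⌋`. -/
def HasBalancedClique (n m : ℕ) (C : ChordDiagram n) : Prop :=
  ∃ S : Finset (Fin (2*n)),
    (∀ x ∈ S, C.1 x ∈ S) ∧
    (∀ x ∈ S, ∀ u ∈ S, u ≠ x → u ≠ C.1 x → Crosses C x u) ∧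
    (∀ t : ℕ, 1 ≤ t → t ≤ 2*m →
      (S.filter fun x => (t-1) * (n/m) ≤ (x:ℕ) ∧ (x:ℕ) < t * (n/m)).card = 1)

/-- An oriented chord diagram: a chord diagram together with auxiliary fair-coin
bits; the bit attached to a crossing pair of chords (indexed by their smaller
endpoints) decides which chord over-crosses the other. -/
abbrev OrientedChordDiagram (n : ℕ) := ChordDiagram n × (Fin (2*n) → Fin (2*n) → Bool)

/-- The smaller endpoint of the chord of `C` containing `x`. -/
def chordRep {n : ℕ} (C : ChordDiagram n) (x : Fin (2*n)) : Fin (2*n) := min x (C.1 x)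

/-- In the oriented diagram `D`, the chord containing `x` crosses and
over-crosses the chord containing `u`. -/
def OverD {n : ℕ} (D : OrientedChordDiagram n) (x u : Fin (2*n)) : Prop :=
  Crosses D.1 x u ∧
    ((chordRep D.1 x ≤ chordRep D.1 u ∧ D.2 (chordRep D.1 x) (chordRep D.1 u) = true) ∨
     (chordRep D.1 u < chordRep D.1 x ∧ D.2 (chordRep D.1 u) (chordRep D.1 x) = false))

/-- Uniform probability of an event over all oriented chord diagrams of size `n`
(this yields a uniformly random diagram with each crossing oriented by an
independent fair coin). -/
noncomputable def probD (n : ℕ) (E : OrientedChordDiagram n → Prop) : ℝ :=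
  ((Finset.univ.filter E).card : ℝ) /
    ((Finset.univ : Finset (OrientedChordDiagram n)).card : ℝ)

/-- The chords (given by their endpoints in `S`) are strongly connected in the
directed intersection graph of `D`, using only chords of `S`. -/
def StronglyConnectedIn {n : ℕ} (D : OrientedChordDiagram n) (S : Set (Fin (2*n))) : Prop :=
  ∀ c ∈ S, ∀ d ∈ S,
    Relation.ReflTransGen (fun a b => a ∈ S ∧ b ∈ S ∧ OverD D a b) c d

/-- The number of chords with both endpoints in the cyclic block
`{i, i+1, …, i+t-1}` (mod `2n`). -/
noncomputable def chordsInBlock (n : ℕ) (C : ChordDiagram n) (i t : ℕ) : ℕ :=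
  (Finset.univ.filter fun x : Fin (2*n) => x < C.1 x ∧
    (∃ a < t, (x:ℕ) = (i + a) % (2*n)) ∧ (∃ a < t, ((C.1 x : ℕ)) = (i + a) % (2*n))).card

/-- The chord of `x` reaches the chord of `u` in the directed intersection graph
(of the whole diagram); endpoints of the same chord represent the same vertex. -/
def ReachChord {n : ℕ} (D : OrientedChordDiagram n) (x u : Fin (2*n)) : Prop :=
  u = x ∨ u = D.1.1 x ∨ Relation.ReflTransGen (fun a b => OverD D a b) x u

/-- The chords of `x` and `u` lie in the same strong component. -/
def MutualReach {n : ℕ} (D : OrientedChordDiagram n) (x u : Fin (2*n)) : Prop :=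
  ReachChord D x u ∧ ReachChord D u x

/-- The number of single-chord strong components of `D`. -/
noncomputable def singleCount (n : ℕ) (D : OrientedChordDiagram n) : ℕ :=
  (Finset.univ.filter fun x : Fin (2*n) =>
    x < D.1.1 x ∧ ∀ u : Fin (2*n), u ≠ x → u ≠ D.1.1 x → ¬ MutualReach D x u).card

noncomputable def cdConj {n : ℕ} (s : Equiv.Perm (Fin (2*n))) (C : ChordDiagram n) : ChordDiagram n :=
  ⟨fun i => s (C.1 (s.symm i)), by
    refine ⟨fun i => by simp [C.2.1], fun i h => ?_⟩
    have := C.2.2 (s.symm i)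
    apply this
    exact s.injective (by simpa using h)⟩

theorem cdConj_swap_swap {n : ℕ} (x y : Fin (2*n)) (C : ChordDiagram n) :
    cdConj (Equiv.swap x y) (cdConj (Equiv.swap x y) C) = C := by
  apply Subtype.ext
  funext i
  simp [cdConj]

theorem cd_count_le {n : ℕ} (P : ChordDiagram n → Prop) (a b b' : Fin (2*n))
    (hab : a ≠ b) (hab' : a ≠ b')
    (hP : ∀ C, P C → P (cdConj (Equiv.swap b b') C)) :
    (univ.filter fun C => P C ∧ C.1 a = b).card ≤ (univ.filter fun C => P C ∧ C.1 a = b').card := by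
  apply Finset.card_le_card_of_injOn (cdConj (Equiv.swap b b'))
  · intro C hC
    simp only [coe_filter, mem_univ, true_and, Set.mem_ofPred_eq] at hC ⊢
    refine ⟨hP C hC.1, ?_⟩
    simp [cdConj, Equiv.swap_apply_of_ne_of_ne hab hab', hC.2]
  · intro C _ C' _ h
    rw [← cdConj_swap_swap b b' C, ← cdConj_swap_swap b b' C', h]

theorem cd_count {n : ℕ} (P : ChordDiagram n → Prop) (F : Finset (Fin (2*n))) (a b : Fin (2*n))
    (haF : a ∈ F) (hb : b ∉ F) (hF : ∀ C, P C → C.1 a ∉ F)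
    (hP : ∀ x y, x ∉ F → y ∉ F → ∀ C, P C → P (cdConj (Equiv.swap x y) C)) :
    ((univ.filter fun C => P C ∧ C.1 a = b).card : ℝ) * (2*n - F.card)
      = (univ.filter fun C => P C).card := by
  have h1 : (univ.filter fun C => P C).card
      = ∑ x ∈ Fᶜ, (univ.filter fun C => P C ∧ C.1 a = x).card := by
    rw [Finset.card_eq_sum_card_fiberwise (f := fun C : ChordDiagram n => C.1 a) (t := Fᶜ)]
    · simp only [Finset.filter_filter]
    · intro C hC
      simp only [coe_filter, mem_univ, true_and, Set.mem_ofPred_eq] at hC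
      simpa using hF C hC
  have h2 : ∀ x ∈ Fᶜ, (univ.filter fun C => P C ∧ C.1 a = x).card
      = (univ.filter fun C => P C ∧ C.1 a = b).card := by
    intro x hx
    rw [Finset.mem_compl] at hx
    have hax : a ≠ x := fun h => hx (h ▸ haF)
    have hab : a ≠ b := fun h => hb (h ▸ haF)
    exact le_antisymm (cd_count_le P a x b hax hab (hP x b hx hb))
      (cd_count_le P a b x hab hax (hP b x hb hx))
  rw [h1, Finset.sum_congr rfl h2, Finset.sum_const, Finset.card_compl, Fintype.card_fin, smul_eq_mul]
  have h3 : F.card ≤ 2*n := by simpa using Finset.card_le_univ F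
  push_cast [Nat.cast_sub h3]
  ring

theorem cdConj_fix {n : ℕ} (x y a b : Fin (2*n)) (C : ChordDiagram n) (hx : x ≠ a) (hy : y ≠ a)
    (hx' : x ≠ b) (hy' : y ≠ b) (h : C.1 a = b) : (cdConj (Equiv.swap x y) C).1 a = b := by
  simp [cdConj, Equiv.swap_apply_of_ne_of_ne hx.symm hy.symm,
    Equiv.swap_apply_of_ne_of_ne hx'.symm hy'.symm, h]

theorem cd_inj {n : ℕ} (C : ChordDiagram n) {x y : Fin (2*n)} (h : C.1 x = C.1 y) : x = y := by
  rw [← C.2.1 x, h, C.2.1]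

theorem cd_flip {n : ℕ} (C : ChordDiagram n) {x y : Fin (2*n)} (h : C.1 x = y) : C.1 y = x := by
  rw [← h, C.2.1]

theorem cd_N1 {n : ℕ} (a b : Fin (2*n)) (hab : a ≠ b) :
    ((univ.filter fun C : ChordDiagram n => C.1 a = b).card : ℝ) * (2*n - 1)
      = (univ : Finset (ChordDiagram n)).card := by
  have := cd_count (fun _ => True) {a} a b (by simp) (by simpa using hab.symm)
    (fun C _ => by simpa using C.2.2 a) (fun _ _ _ _ _ _ => trivial)
  simpa using this

theorem cd_N2 {n : ℕ} (a b c d : Fin (2*n)) (hab : a ≠ b) (hac : a ≠ c) (had : a ≠ d)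
    (hbc : b ≠ c) (hbd : b ≠ d) (hcd : c ≠ d) :
    ((univ.filter fun C : ChordDiagram n => C.1 a = b ∧ C.1 c = d).card : ℝ) * (2*n - 3)
      = (univ.filter fun C : ChordDiagram n => C.1 a = b).card := by
  have := cd_count (fun C => C.1 a = b) {a, b, c} c d (by simp)
    (by simp [hcd.symm, had.symm, hbd.symm])
    (fun C h => by
      simp only [mem_insert, mem_singleton, not_or]
      refine ⟨fun h' => hbc ?_, fun h' => hac ?_, C.2.2 c⟩
      · rw [← h, ← h', C.2.1]
      · exact cd_inj C (h.trans h'.symm))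
    (fun x y hx hy C h => by
      simp only [mem_insert, mem_singleton, not_or] at hx hy
      exact cdConj_fix x y a b C hx.1 hy.1 hx.2.1 hy.2.1 h)
  rw [Finset.card_insert_of_notMem (by simp [hab, hac]), Finset.card_pair hbc] at this
  norm_num at this
  convert this

theorem cd_N3 {n : ℕ} (a b c d e f : Fin (2*n)) (hab : a ≠ b) (hac : a ≠ c) (had : a ≠ d)
    (hbc : b ≠ c) (hbd : b ≠ d) (hcd : c ≠ d) (hae : a ≠ e) (hbe : b ≠ e) (hce : c ≠ e) (hde : d ≠ e)
    (haf : a ≠ f) (hbf : b ≠ f) (hcf : c ≠ f) (hdf : d ≠ f) (hef : e ≠ f) :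
    ((univ.filter fun C : ChordDiagram n => (C.1 a = b ∧ C.1 c = d) ∧ C.1 e = f).card : ℝ) * (2*n - 5)
      = (univ.filter fun C : ChordDiagram n => C.1 a = b ∧ C.1 c = d).card := by
  have := cd_count (fun C => C.1 a = b ∧ C.1 c = d) {a, b, c, d, e} e f (by simp)
    (by simp [haf.symm, hbf.symm, hcf.symm, hdf.symm, hef.symm])
    (fun C h => by
      simp only [mem_insert, mem_singleton, not_or]
      refine ⟨fun h' => hbe ?_, fun h' => hae ?_, fun h' => hde ?_, fun h' => hce ?_, C.2.2 e⟩
      · rw [← h.1, ← h', C.2.1]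
      · exact cd_inj C (h.1.trans h'.symm)
      · rw [← h.2, ← h', C.2.1]
      · exact cd_inj C (h.2.trans h'.symm))
    (fun x y hx hy C h => by
      simp only [mem_insert, mem_singleton, not_or] at hx hy
      exact ⟨cdConj_fix x y a b C hx.1 hy.1 hx.2.1 hy.2.1 h.1,
        cdConj_fix x y c d C hx.2.2.1 hy.2.2.1 hx.2.2.2.1 hy.2.2.2.1 h.2⟩)
  rw [Finset.card_insert_of_notMem (by simp [hab, hac, had, hae]),
    Finset.card_insert_of_notMem (by simp [hbc, hbd, hbe]),
    Finset.card_insert_of_notMem (by simp [hcd, hce]), Finset.card_pair hde] at this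
  norm_num at this
  convert this

theorem cd_pos (n : ℕ) : 0 < (univ : Finset (ChordDiagram n)).card := by
  apply Finset.card_pos.mpr
  refine ⟨⟨Fin.rev, fun i => Fin.rev_rev i, fun i h => ?_⟩, mem_univ _⟩
  have := congrArg Fin.val h
  rw [Fin.val_rev] at this
  omega

/-- degree as a sum of indicators -/
theorem cd_degree {n : ℕ} (C : ChordDiagram n) (z k : Fin (2*n)) (hz : (z : ℕ) = 0) (h : C.1 z = k) :
    (chordDegree C z : ℝ) = ∑ p ∈ Ioo z k ×ˢ Ioi k, if C.1 p.1 = p.2 then (1:ℝ) else 0 := by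
  rw [Finset.sum_product]
  have hzk : z < k := by
    have h1 := C.2.2 z
    rw [h] at h1
    have h2 : (k : ℕ) ≠ z := fun e => h1 (Fin.ext e)
    rw [Fin.lt_def]; omega
  have h1 : ∀ u, (∑ y ∈ Ioi k, if C.1 u = y then (1:ℝ) else 0) = if C.1 u ∈ Ioi k then 1 else 0 := by
    intro u; rw [Finset.sum_ite_eq]
  simp only [h1]
  rw [← Finset.sum_filter, Finset.sum_const, nsmul_eq_mul, mul_one]
  unfold chordDegree
  congr 2
  ext u
  simp only [mem_filter, mem_univ, true_and, mem_Ioo, mem_Ioi, Crosses, Between, h, min_eq_left hzk.le,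
    max_eq_right hzk.le, Xor']
  constructor
  · rintro ⟨h2, ⟨⟨h3, h4⟩, h5⟩ | ⟨⟨h3, h4⟩, h5⟩⟩
    · refine ⟨⟨h3, h4⟩, ?_⟩
      by_contra h6
      push Not at h6
      rcases h6.lt_or_eq with h7 | h7
      · exact h5 ⟨h3.trans h2, h7⟩
      · have := cd_inj C (h7.trans h.symm)
        exact h3.ne this.symm
    · exfalso
      have h6 : u ≠ z := by
        rintro rfl
        rw [h] at h4
        exact lt_irrefl _ h4
      have h7 : (u : ℕ) ≠ z := fun e => h6 (Fin.ext e)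
      exact h5 ⟨by rw [Fin.lt_def]; omega, h2.trans h4⟩
  · rintro ⟨⟨h3, h4⟩, h5⟩
    exact ⟨h4.trans h5, Or.inl ⟨⟨h3, h4⟩, fun h6 => lt_asymm h6.2 h5⟩⟩

theorem cd_first {n : ℕ} (hn : 3 ≤ n) (z k : Fin (2*n)) (hz : (z : ℕ) = 0) (hk : z < k) :
    ∑ C ∈ univ.filter (fun C : ChordDiagram n => C.1 z = k), (chordDegree C z : ℝ)
     = (univ.filter fun C : ChordDiagram n => C.1 z = k).card *
       (((Ioo z k).card * (Ioi k).card : ℝ) / (2*n - 3)) := by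
  have hn' : (3:ℝ) ≤ n := by exact_mod_cast hn
  rw [Finset.sum_congr rfl (fun C hC => cd_degree C z k hz (by simpa using hC)), Finset.sum_comm]
  have : ∀ p ∈ Ioo z k ×ˢ Ioi k,
      (∑ C ∈ univ.filter (fun C : ChordDiagram n => C.1 z = k), if C.1 p.1 = p.2 then (1:ℝ) else 0)
      = (univ.filter fun C : ChordDiagram n => C.1 z = k).card / (2*n-3) := by
    intro p hp
    simp only [mem_product, mem_Ioo, mem_Ioi] at hp
    rw [← Finset.sum_filter, Finset.filter_filter, Finset.sum_const, nsmul_eq_mul, mul_one,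
      eq_div_iff (by linarith)]
    exact cd_N2 z k p.1 p.2 hk.ne hp.1.1.ne (hk.trans hp.2).ne hp.1.2.ne' hp.2.ne (hp.1.2.trans hp.2).ne
  rw [Finset.sum_congr rfl this, Finset.sum_const, Finset.card_product, nsmul_eq_mul]
  push_cast
  ring

theorem cd_second {n : ℕ} (hn : 3 ≤ n) (z k : Fin (2*n)) (hz : (z : ℕ) = 0) (hk : z < k) :
    ∑ C ∈ univ.filter (fun C : ChordDiagram n => C.1 z = k), (chordDegree C z : ℝ)^2
     ≤ (univ.filter fun C : ChordDiagram n => C.1 z = k).card *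
       (((Ioo z k).card * (Ioi k).card : ℝ) *
        (1 / (2*n - 3) + ((Ioo z k).card - 1) * ((Ioi k).card - 1) / ((2*n - 3) * (2*n-5)))) := by
  have hn' : (3:ℝ) ≤ n := by exact_mod_cast hn
  set S : ℝ := Nat.cast (univ.filter fun C : ChordDiagram n => C.1 z = k).card with hS
  have e1 : ∀ C ∈ univ.filter (fun C : ChordDiagram n => C.1 z = k), (chordDegree C z : ℝ)^2
      = ∑ p ∈ Ioo z k ×ˢ Ioi k, ∑ q ∈ Ioo z k ×ˢ Ioi k,
        if (C.1 p.1 = p.2 ∧ C.1 q.1 = q.2) then (1:ℝ) else 0 := by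
    intro C hC
    rw [cd_degree C z k hz (by simpa using hC), sq, Finset.sum_mul_sum]
    refine Finset.sum_congr rfl fun p _ => Finset.sum_congr rfl fun q _ => ?_
    by_cases h1 : C.1 p.1 = p.2 <;> by_cases h2 : C.1 q.1 = q.2 <;> simp [h1, h2]
  rw [Finset.sum_congr rfl e1, Finset.sum_comm]
  have key : ∀ p ∈ Ioo z k ×ˢ Ioi k,
      (∑ C ∈ univ.filter (fun C : ChordDiagram n => C.1 z = k), ∑ q ∈ Ioo z k ×ˢ Ioi k,
        if (C.1 p.1 = p.2 ∧ C.1 q.1 = q.2) then (1:ℝ) else 0)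
      ≤ S * (1 / (2*n - 3) + ((Ioo z k).card - 1) * ((Ioi k).card - 1) / ((2*n - 3) * (2*n-5))) := by
    intro p hp
    have hp' := hp
    simp only [mem_product, mem_Ioo, mem_Ioi] at hp
    have h2 := cd_N2 z k p.1 p.2 hk.ne hp.1.1.ne (hk.trans hp.2).ne hp.1.2.ne' hp.2.ne
      (hp.1.2.trans hp.2).ne
    rw [← hS, ← eq_div_iff (by linarith)] at h2
    rw [Finset.sum_comm]
    have hq : ∀ q ∈ Ioo z k ×ˢ Ioi k,
        (∑ C ∈ univ.filter (fun C : ChordDiagram n => C.1 z = k),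
          if (C.1 p.1 = p.2 ∧ C.1 q.1 = q.2) then (1:ℝ) else 0)
        ≤ (if p = q then S / (2*n-3) else 0) +
          (if q ∈ (Ioo z k).erase p.1 ×ˢ (Ioi k).erase p.2 then S / (2*n-3) / (2*n-5) else 0) := by
      intro q hq
      have hq' := hq
      simp only [mem_product, mem_Ioo, mem_Ioi] at hq
      rw [← Finset.sum_filter, Finset.filter_filter, Finset.sum_const, nsmul_eq_mul, mul_one]
      by_cases h11 : q.1 = p.1
      · by_cases h22 : q.2 = p.2
        · have hpq : p = q := Prod.ext h11.symm h22.symm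
          subst hpq
          simp only [and_self]
          simp [h2]
        · rw [Finset.filter_eq_empty_iff.mpr]
          · simp only [card_empty, Nat.cast_zero]
            have : p ≠ q := fun h => h22 (by rw [h])
            simp [this, h11]
          · rintro C - ⟨_, h4, h5⟩
            rw [h11, h4] at h5
            exact h22 h5.symm
      · have hpq : p ≠ q := fun h => h11 (by rw [h])
        by_cases h22 : q.2 = p.2
        · rw [Finset.filter_eq_empty_iff.mpr]
          · simp [hpq, h22]
          · rintro C - ⟨_, h4, h5⟩
            exact h11 (cd_inj C (by rw [h5, h4, h22]))
        · have h3 := cd_N3 z k p.1 p.2 q.1 q.2 hk.ne hp.1.1.ne (hk.trans hp.2).ne hp.1.2.ne' hp.2.ne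
            (hp.1.2.trans hp.2).ne hq.1.1.ne hq.1.2.ne' (fun h => h11 h.symm) (hq.1.2.trans hp.2).ne'
            (hk.trans hq.2).ne hq.2.ne (hp.1.2.trans hq.2).ne (fun h => h22 h.symm)
            (hq.1.2.trans hq.2).ne
          rw [h2, ← eq_div_iff (by linarith)] at h3
          simp only [and_assoc] at h3
          rw [h3]
          simp only [if_neg hpq, zero_add]
          rw [if_pos]
          simp [h11, h22, hq]
    refine (Finset.sum_le_sum hq).trans (le_of_eq ?_)
    rw [Finset.sum_add_distrib, Finset.sum_ite_eq, if_pos hp', ← Finset.sum_filter]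
    rw [Finset.filter_mem_eq_inter, Finset.inter_eq_right.mpr
      (Finset.product_subset_product (Finset.erase_subset _ _) (Finset.erase_subset _ _)),
      Finset.sum_const, Finset.card_product, Finset.card_erase_of_mem (by simpa using hp.1),
      Finset.card_erase_of_mem (by simpa using hp.2), nsmul_eq_mul]
    have c1 : 1 ≤ (Ioo z k).card := Finset.card_pos.mpr ⟨p.1, by simpa using hp.1⟩
    have c2 : 1 ≤ (Ioi k).card := Finset.card_pos.mpr ⟨p.2, by simpa using hp.2⟩
    push_cast [Nat.cast_sub c1, Nat.cast_sub c2]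
    have : (2*n-3:ℝ) ≠ 0 := by linarith
    have : (2*n-5:ℝ) ≠ 0 := by linarith
    field_simp
  refine (Finset.sum_le_sum key).trans (le_of_eq ?_)
  rw [Finset.sum_const, Finset.card_product, nsmul_eq_mul]
  push_cast
  ring

noncomputable def cdMu (n : ℕ) (k : ℕ) : ℝ := ((k:ℝ) - 1) * (2*n - 1 - k) / (2*n - 3)

theorem cd_var_real (n a b : ℝ) (hn : 3 ≤ n) (ha : 0 ≤ a) (hb : 0 ≤ b) (hab : a + b = 2*n-2) :
    a * b * (1 / (2*n - 3) + (a - 1) * (b - 1) / ((2*n - 3) * (2*n-5)))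
      - (a * b / (2*n-3))^2 ≤ n := by
  have h1 : 0 < 2*n-3 := by linarith
  have h2 : 0 < 2*n-5 := by linarith
  have e : a * b * (1 / (2*n - 3) + (a - 1) * (b - 1) / ((2*n - 3) * (2*n-5)))
      - (a * b / (2*n-3))^2 = 2 * (a*b) * (a*b - (2*n-3)) / ((2*n-3)^2*(2*n-5)) := by
    have : (a-1)*(b-1) = a*b - (2*n-3) := by linear_combination -hab
    rw [this]
    field_simp
    ring
  rw [e, div_le_iff₀ (by positivity)]
  have hx : a*b ≤ (n-1)^2 := by nlinarith [sq_nonneg (a-b)]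
  have hx0 : 0 ≤ a * b := mul_nonneg ha hb
  set x := a*b
  have : x * (x - (2*n-3)) ≤ (n-1)^2 * (n-2)^2 := by
    by_cases h : x ≤ 2*n-3
    · have : x * (x - (2*n-3)) ≤ 0 := mul_nonpos_of_nonneg_of_nonpos hx0 (by linarith)
      have : 0 ≤ (n-1)^2 * (n-2)^2 := by positivity
      linarith
    · apply mul_le_mul hx (by nlinarith) (by linarith) (by positivity)
  have h3 : (n-1)*(n-2) ≤ (2*n-3)^2/4 := by nlinarith
  have h4 : ((n-1)*(n-2))^2 ≤ ((2*n-3)^2/4)^2 := by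
    apply pow_le_pow_left₀ _ h3
    apply mul_nonneg <;> linarith
  have h5 : (2*n-3)^2 ≤ 8 * (n * (2*n-5)) := by nlinarith
  have h6 : (2*n-3)^2 * (2*n-3)^2 ≤ (2*n-3)^2 * (8 * (n * (2*n-5))) :=
    mul_le_mul_of_nonneg_left h5 (by positivity)
  nlinarith

theorem cd_var {n : ℕ} (hn : 3 ≤ n) (z k : Fin (2*n)) (hz : (z : ℕ) = 0) (hk : z < k) :
    ∑ C ∈ univ.filter (fun C : ChordDiagram n => C.1 z = k), ((chordDegree C z : ℝ) - cdMu n k)^2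
     ≤ (univ.filter fun C : ChordDiagram n => C.1 z = k).card * n := by
  have hn' : (3:ℝ) ≤ n := by exact_mod_cast hn
  have f1 := cd_first hn z k hz hk
  have f2 := cd_second hn z k hz hk
  rw [Fin.lt_def, hz] at hk
  have hk2 := k.2
  have ha : ((Ioo z k).card : ℝ) = k - 1 := by
    rw [Fin.card_Ioo, hz, Nat.sub_zero, Nat.cast_sub (by omega)]; simp
  have hb : ((Ioi k).card : ℝ) = 2*n - 1 - k := by
    rw [Fin.card_Ioi, Nat.cast_sub (by omega), Nat.cast_sub (by omega)]; push_cast; ring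
  have hv := cd_var_real n (Ioo z k).card (Ioi k).card hn' (by positivity) (by positivity)
    (by rw [ha, hb]; ring)
  have hmu : cdMu n k = (Ioo z k).card * (Ioi k).card / (2*n-3) := by rw [ha, hb, cdMu]
  rw [hmu]
  set S : ℝ := Nat.cast (univ.filter fun C : ChordDiagram n => C.1 z = k).card with hS
  have hS0 : 0 ≤ S := by positivity
  set m : ℝ := (Ioo z k).card * (Ioi k).card / (2*n-3)
  have : ∀ C : ChordDiagram n, ((chordDegree C z : ℝ) - m)^2
    = (chordDegree C z : ℝ)^2 - 2 * m * chordDegree C z + m^2 := fun C => by ring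
  simp only [this]
  rw [Finset.sum_add_distrib, Finset.sum_sub_distrib, ← Finset.mul_sum, f1, Finset.sum_const, nsmul_eq_mul,
    ← hS]
  have := mul_le_mul_of_nonneg_left hv hS0
  nlinarith

theorem cd_var_total {n : ℕ} (hn : 3 ≤ n) (z : Fin (2*n)) (hz : (z : ℕ) = 0) :
    ∑ C : ChordDiagram n, ((chordDegree C z : ℝ) - cdMu n (C.1 z))^2
     ≤ (univ : Finset (ChordDiagram n)).card * n := by
  rw [← Finset.sum_fiberwise (s := univ) (g := fun C : ChordDiagram n => C.1 z),
    Finset.card_eq_sum_card_fiberwise (f := fun C : ChordDiagram n => C.1 z) (t := univ) (by simp)]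
  push_cast
  rw [Finset.sum_mul]
  apply Finset.sum_le_sum
  intro k _
  by_cases hk : z = k
  · subst hk
    rw [Finset.filter_eq_empty_iff.mpr (fun C _ => C.2.2 z)]
    simp
  · have hk' : (k : ℕ) ≠ z := fun e => hk (Fin.ext e.symm)
    have := cd_var hn z k hz (by rw [Fin.lt_def]; omega)
    refine le_trans (le_of_eq ?_) this
    apply Finset.sum_congr rfl
    intro C hC
    rw [(Finset.mem_filter.mp hC).2]

theorem cd_bad {n : ℕ} (hn : 3 ≤ n) (z : Fin (2*n)) (hz : (z : ℕ) = 0) (e : ℝ) (he : 0 < e) :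
    ((univ.filter fun C : ChordDiagram n => e * n ≤ |(chordDegree C z : ℝ) - cdMu n (C.1 z)|).card : ℝ)
      ≤ (univ : Finset (ChordDiagram n)).card * (1 / (e^2 * n)) := by
  have hn' : (3:ℝ) ≤ n := by exact_mod_cast hn
  have h := cd_var_total hn z hz
  have h2 : ((univ.filter fun C : ChordDiagram n =>
      e * n ≤ |(chordDegree C z : ℝ) - cdMu n (C.1 z)|).card : ℝ) * (e*n)^2
      ≤ ∑ C : ChordDiagram n, ((chordDegree C z : ℝ) - cdMu n (C.1 z))^2 := by
    rw [← nsmul_eq_mul, ← Finset.sum_const]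
    refine (Finset.sum_le_sum (fun C hC => ?_)).trans
      (Finset.sum_le_sum_of_subset_of_nonneg (Finset.filter_subset _ _) (fun _ _ _ => sq_nonneg _))
    rw [← sq_abs (_ - _)]
    exact pow_le_pow_left₀ (by positivity) (Finset.mem_filter.mp hC).2 2
  have h3 := h2.trans h
  rw [← le_div_iff₀ (by positivity)] at h3
  refine h3.trans (le_of_eq ?_)
  field_simp

theorem cd_mu_count {n : ℕ} (z : Fin (2*n)) (c : ℝ) :
    ((univ.filter fun C : ChordDiagram n => c * n < cdMu n (C.1 z)).card : ℝ) * (2*n - 1)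
      = (univ : Finset (ChordDiagram n)).card *
        (univ.filter fun k : Fin (2*n) => k ≠ z ∧ c * n < cdMu n k).card := by
  rw [Finset.card_eq_sum_card_fiberwise (f := fun C : ChordDiagram n => C.1 z)
    (t := univ.filter fun k : Fin (2*n) => k ≠ z ∧ c * n < cdMu n k)]
  · push_cast
    rw [Finset.sum_mul, mul_comm (_ : ℝ) (((univ.filter fun k : Fin (2*n) => _).card : ℕ) : ℝ),
      ← nsmul_eq_mul, ← Finset.sum_const]
    apply Finset.sum_congr rfl
    intro k hk
    simp only [mem_filter, mem_univ, true_and] at hk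
    rw [← cd_N1 z k hk.1.symm, Finset.filter_filter]
    congr 3
    ext C
    simp only [mem_filter, mem_univ, true_and, and_iff_right_iff_imp]
    intro h
    rw [h]; exact hk.2
  · intro C hC
    simp only [coe_filter, mem_univ, true_and, Set.mem_ofPred_eq] at hC ⊢
    exact ⟨C.2.2 z, hC⟩

theorem cd_mu_iff {n : ℕ} (hn : 3 ≤ n) (c : ℝ) (k : ℕ) :
    c * n < cdMu n k ↔ ((k:ℝ) - n)^2 < ((n:ℝ)-1)^2 - c * n * (2*n-3) := by
  have hn' : (3:ℝ) ≤ n := by exact_mod_cast hn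
  unfold cdMu
  rw [lt_div_iff₀ (by linarith)]
  constructor <;> intro h <;> nlinarith

theorem cd_K_upper {n : ℕ} (hn : 3 ≤ n) (z : Fin (2*n)) (c : ℝ) :
    ((univ.filter fun k : Fin (2*n) => k ≠ z ∧ c * n < cdMu n k).card : ℝ)
      ≤ 2 * √(((n:ℝ)-1)^2 - c * n * (2*n-3)) + 1 := by
  set s := √(((n:ℝ)-1)^2 - c * n * (2*n-3)) with hs
  have hs0 : 0 ≤ s := Real.sqrt_nonneg _
  have h1 : (univ.filter fun k : Fin (2*n) => k ≠ z ∧ c * n < cdMu n k).card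
      ≤ (Icc ⌈(n:ℝ) - s⌉ ⌊(n:ℝ) + s⌋).card := by
    apply Finset.card_le_card_of_injOn (fun k : Fin (2*n) => ((k : ℕ) : ℤ))
    · intro k hk
      simp only [coe_filter, mem_univ, true_and, Set.mem_ofPred_eq] at hk
      have h2 := abs_lt_of_sq_lt_sq (a := (k:ℝ) - n) (b := s) (by
        rw [hs, Real.sq_sqrt]
        · exact (cd_mu_iff hn c k).mp hk.2
        · exact ((sq_nonneg _).trans_lt ((cd_mu_iff hn c k).mp hk.2)).le) hs0
      rw [abs_lt] at h2
      simp only [coe_Icc, Set.mem_Icc]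
      constructor
      · rw [Int.ceil_le]; push_cast; linarith
      · rw [Int.le_floor]; push_cast; linarith
    · intro a _ b _ h
      apply Fin.ext
      simpa using h
  rw [Int.card_Icc] at h1
  have h2 : (((⌊(n:ℝ) + s⌋ + 1 - ⌈(n:ℝ) - s⌉).toNat : ℤ) : ℝ) ≤ 2 * s + 1 := by
    rw [Int.toNat_eq_max]
    push_cast
    apply max_le
    · have := Int.floor_le ((n:ℝ) + s)
      have := Int.le_ceil ((n:ℝ) - s)
      linarith
    · linarith
  refine le_trans ?_ h2
  exact_mod_cast h1

theorem cd_K_lower {n : ℕ} (hn : 3 ≤ n) (z : Fin (2*n)) (hz : (z:ℕ) = 0) (c : ℝ) (hc : 0 ≤ c) :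
    2 * √(((n:ℝ)-1)^2 - c * n * (2*n-3)) - 1 ≤
     ((univ.filter fun k : Fin (2*n) => k ≠ z ∧ c * n < cdMu n k).card : ℝ) := by
  have hn' : (3:ℝ) ≤ n := by exact_mod_cast hn
  set s := √(((n:ℝ)-1)^2 - c * n * (2*n-3)) with hs
  have hs0 : 0 ≤ s := Real.sqrt_nonneg _
  have hs1 : s ≤ n - 1 := by
    rw [hs]
    apply Real.sqrt_le_iff.mpr
    refine ⟨by linarith, ?_⟩
    have : 0 ≤ c * n * (2*n-3) := mul_nonneg (by positivity) (by linarith)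
    linarith
  have h1 : (Icc (⌊(n:ℝ) - s⌋ + 1) (⌈(n:ℝ) + s⌉ - 1)).card ≤
      (univ.filter fun k : Fin (2*n) => k ≠ z ∧ c * n < cdMu n k).card := by
    refine le_trans (Finset.card_le_card ?_)
      (Finset.card_image_le (f := fun k : Fin (2*n) => ((k : ℕ) : ℤ)))
    intro j hj
    rw [Finset.mem_Icc, Int.add_one_le_iff, Int.le_sub_one_iff, Int.floor_lt, Int.lt_ceil] at hj
    have j1 : (1:ℝ) < j := by linarith
    have j2 : (j:ℝ) < 2*n - 1 := by linarith
    have j1' : 1 < j := by exact_mod_cast j1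
    have j2' : j < 2*n-1 := by exact_mod_cast j2
    lift j to ℕ using (by omega)
    rw [Finset.mem_image]
    refine ⟨⟨j, by omega⟩, ?_, rfl⟩
    simp only [mem_filter, mem_univ, true_and]
    refine ⟨fun h => ?_, ?_⟩
    · have := congrArg Fin.val h
      simp only [hz] at this
      omega
    · rw [cd_mu_iff hn]
      push_cast at hj
      have habs : |(j:ℝ) - n| < s := by rw [abs_lt]; constructor <;> linarith
      have hspos : 0 < s := (abs_nonneg _).trans_lt habs
      rw [hs, Real.sqrt_pos] at hspos
      rw [← Real.sq_sqrt hspos.le, ← hs, sq_lt_sq, abs_of_nonneg hs0]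
      exact habs
  rw [Int.card_Icc] at h1
  have h2 : 2 * s - 1 ≤ (((⌈(n:ℝ) + s⌉ - 1 + 1 - (⌊(n:ℝ) - s⌋ + 1)).toNat : ℤ) : ℝ) := by
    rw [Int.toNat_eq_max]
    push_cast
    apply le_max_of_le_left
    have := Int.floor_le ((n:ℝ) - s)
    have := Int.le_ceil ((n:ℝ) + s)
    linarith
  refine le_trans h2 ?_
  exact_mod_cast h1

theorem cd_prob_compl {n : ℕ} (hn : 3 ≤ n) (z : Fin (2*n)) (hz : (z:ℕ) = 0) (b : ℝ) :
    (1 - prob n (fun C => (degreeC1 n C : ℝ) ≤ b * n)) * (univ : Finset (ChordDiagram n)).card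
      = (univ.filter fun C : ChordDiagram n => b * n < (chordDegree C z : ℝ)).card := by
  have hT : (0:ℝ) < (univ : Finset (ChordDiagram n)).card := by exact_mod_cast cd_pos n
  have hd : ∀ C : ChordDiagram n, degreeC1 n C = chordDegree C z := by
    intro C
    unfold degreeC1
    rw [dif_pos (by omega)]
    congr 1
    exact Fin.ext hz.symm
  unfold prob
  simp only [hd]
  rw [sub_mul, div_mul_cancel₀ _ hT.ne', one_mul, sub_eq_iff_eq_add]
  have := Finset.card_filter_add_card_filter_not (s := (univ : Finset (ChordDiagram n)))
    (fun C : ChordDiagram n => b * n < (chordDegree C z : ℝ))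
  simp only [not_lt] at this
  exact_mod_cast this.symm

theorem cd_lower {n : ℕ} (hn : 3 ≤ n) (b e : ℝ) (hb : 0 ≤ b) (he : 0 < e) :
    (2 * √(((n:ℝ)-1)^2 - (b+e) * n * (2*n-3)) - 1) / (2*n-1) - 1 / (e^2*n)
     ≤ 1 - prob n (fun C => (degreeC1 n C : ℝ) ≤ b * n) := by
  have hn' : (3:ℝ) ≤ n := by exact_mod_cast hn
  have hT : (0:ℝ) < (univ : Finset (ChordDiagram n)).card := by exact_mod_cast cd_pos n
  let z : Fin (2*n) := ⟨0, by omega⟩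
  have h1 := cd_prob_compl hn z rfl b
  have h2 := cd_bad hn z rfl e he
  have h3 := cd_mu_count z (b+e)
  have h4 := cd_K_lower hn z rfl (b+e) (by linarith)
  have h5 : (univ.filter fun C : ChordDiagram n => (b+e) * n < cdMu n (C.1 z)).card ≤
      (univ.filter fun C : ChordDiagram n => e * n ≤ |(chordDegree C z : ℝ) - cdMu n (C.1 z)|).card +
      (univ.filter fun C : ChordDiagram n => b * n < (chordDegree C z : ℝ)).card := by
    refine le_trans (Finset.card_le_card ?_) (Finset.card_union_le _ _)
    intro C hC
    simp only [mem_filter, mem_univ, true_and, mem_union] at hC ⊢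
    by_contra! h
    have := (abs_lt.mp h.1).1
    linarith [h.2]
  have h5' : ((univ.filter fun C : ChordDiagram n => (b+e) * n < cdMu n (C.1 z)).card : ℝ) ≤
      (univ.filter fun C : ChordDiagram n => e * n ≤ |(chordDegree C z : ℝ) - cdMu n (C.1 z)|).card +
      (univ.filter fun C : ChordDiagram n => b * n < (chordDegree C z : ℝ)).card := by exact_mod_cast h5
  rw [← h1] at h5'
  rw [← eq_div_iff (by linarith)] at h3
  rw [h3] at h5'
  have h6 := h5'.trans (add_le_add_left h2 _)
  rw [mul_div_assoc, mul_comm (1 - _), ← mul_add, mul_le_mul_iff_right₀ hT] at h6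
  have h7 := div_le_div_of_nonneg_right h4 (show (0:ℝ) ≤ 2*n-1 by linarith)
  linarith

theorem cd_upper {n : ℕ} (hn : 3 ≤ n) (b e : ℝ) (he : 0 < e) :
    1 - prob n (fun C => (degreeC1 n C : ℝ) ≤ b * n) ≤
    (2 * √(((n:ℝ)-1)^2 - (b-e) * n * (2*n-3)) + 1) / (2*n-1) + 1 / (e^2*n) := by
  have hn' : (3:ℝ) ≤ n := by exact_mod_cast hn
  have hT : (0:ℝ) < (univ : Finset (ChordDiagram n)).card := by exact_mod_cast cd_pos n
  let z : Fin (2*n) := ⟨0, by omega⟩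
  have h1 := cd_prob_compl hn z rfl b
  have h2 := cd_bad hn z rfl e he
  have h3 := cd_mu_count z (b-e)
  have h4 := cd_K_upper hn z (b-e)
  have h5 : (univ.filter fun C : ChordDiagram n => b * n < (chordDegree C z : ℝ)).card ≤
      (univ.filter fun C : ChordDiagram n => e * n ≤ |(chordDegree C z : ℝ) - cdMu n (C.1 z)|).card +
      (univ.filter fun C : ChordDiagram n => (b-e) * n < cdMu n (C.1 z)).card := by
    refine le_trans (Finset.card_le_card ?_) (Finset.card_union_le _ _)
    intro C hC
    simp only [mem_filter, mem_univ, true_and, mem_union] at hC ⊢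
    by_contra! h
    have := (abs_lt.mp h.1).2
    linarith [h.2]
  have h5' : ((univ.filter fun C : ChordDiagram n => b * n < (chordDegree C z : ℝ)).card : ℝ) ≤
      (univ.filter fun C : ChordDiagram n => e * n ≤ |(chordDegree C z : ℝ) - cdMu n (C.1 z)|).card +
      (univ.filter fun C : ChordDiagram n => (b-e) * n < cdMu n (C.1 z)).card := by exact_mod_cast h5
  rw [← h1] at h5'
  rw [← eq_div_iff (by linarith)] at h3
  rw [h3] at h5'
  have h6 := h5'.trans (add_le_add_left h2 _)
  rw [mul_div_assoc, mul_comm (1 - _), ← mul_add, mul_le_mul_iff_right₀ hT] at h6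
  have h7 := div_le_div_of_nonneg_right h4 (show (0:ℝ) ≤ 2*n-1 by linarith)
  linarith

theorem cd_scale (n c d : ℝ) (hn : 1 ≤ n) :
    (2 * √((n-1)^2 - c * n * (2*n-3)) + d) / (2*n-1)
      = (2 * √((1-n⁻¹)^2 - c * (2-3*n⁻¹)) + d * n⁻¹) / (2 - n⁻¹) := by
  have h0 : 0 < n := by linarith
  have : (n-1)^2 - c * n * (2*n-3) = n^2 * ((1-n⁻¹)^2 - c * (2-3*n⁻¹)) := by
    field_simp
  rw [this, Real.sqrt_mul (by positivity), Real.sqrt_sq h0.le]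
  have h1 : 2*n-1 ≠ 0 := by linarith
  have h3 : 2 - n⁻¹ = (2*n-1)/n := by field_simp
  rw [h3]
  field_simp

theorem cd_lim (b d : ℝ) (e : ℕ → ℝ) (he : Tendsto e atTop (nhds 0)) :
    Tendsto (fun n : ℕ => (2 * √((1-(n:ℝ)⁻¹)^2 - (b + e n) * (2-3*(n:ℝ)⁻¹)) + d * (n:ℝ)⁻¹)
      / (2 - (n:ℝ)⁻¹)) atTop (nhds (√(1-2*b))) := by
  have hx : Tendsto (fun n : ℕ => (n:ℝ)⁻¹) atTop (nhds 0) := tendsto_inv_atTop_nhds_zero_nat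
  have h1 : Tendsto (fun n : ℕ => (1-(n:ℝ)⁻¹)^2 - (b + e n) * (2-3*(n:ℝ)⁻¹)) atTop
      (nhds ((1-0)^2 - (b+0) * (2-3*0))) :=
    ((hx.const_sub 1).pow 2).sub ((he.const_add b).mul ((hx.const_mul 3).const_sub 2))
  have h2 := ((h1.sqrt.const_mul 2).add (hx.const_mul d)).div (hx.const_sub 2) (by norm_num)
  convert h2 using 2
  norm_num
  ring_nf

theorem stmt0 (b : ℝ) (hb0 : 0 ≤ b) (hb1 : b ≤ 1/2) :
    Filter.Tendsto
      (fun n : ℕ => prob n (fun C => (degreeC1 n C : ℝ) ≤ b * n))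
      Filter.atTop (nhds (1 - Real.sqrt (1 - 2*b))) := by
  suffices h : Tendsto (fun n : ℕ => 1 - prob n (fun C => (degreeC1 n C : ℝ) ≤ b * n))
      atTop (nhds (√(1-2*b))) by
    have := h.const_sub 1
    simpa using this
  let e : ℕ → ℝ := fun n => (√(√(n:ℝ)))⁻¹
  have he : Tendsto e atTop (nhds 0) :=
    tendsto_inv_atTop_zero.comp
      (Real.tendsto_sqrt_atTop.comp (Real.tendsto_sqrt_atTop.comp tendsto_natCast_atTop_atTop))
  have hepos : ∀ n : ℕ, 3 ≤ n → 0 < e n := by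
    intro n hn
    have : (0:ℝ) < n := by exact_mod_cast (by omega : 0 < n)
    simp only [e]
    positivity
  have he2 : ∀ n : ℕ, 3 ≤ n → 1 / ((e n)^2 * n) = (e n)^2 := by
    intro n hn
    have h0 : (0:ℝ) < n := by exact_mod_cast (by omega : 0 < n)
    have h1 : (e n)^2 = (√(n:ℝ))⁻¹ := by
      simp only [e]
      rw [inv_pow, Real.sq_sqrt (Real.sqrt_nonneg _)]
    rw [h1]
    have h2 : (√(n:ℝ)) ≠ 0 := (Real.sqrt_pos.mpr h0).ne'
    have h3 := Real.sq_sqrt h0.le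
    field_simp
    exact h3
  have hl := (cd_lim b (-1) e he).sub (he.pow 2)
  have hu := (cd_lim b 1 (fun n => -e n) (by simpa using he.neg)).add (he.pow 2)
  have z1 : √(1-2*b) - 0^2 = √(1-2*b) := by ring
  have z2 : √(1-2*b) + 0^2 = √(1-2*b) := by ring
  rw [z1] at hl
  rw [z2] at hu
  refine tendsto_of_tendsto_of_tendsto_of_le_of_le' hl hu ?_ ?_
  · filter_upwards [eventually_ge_atTop 3] with n hn
    have hn' : (3:ℝ) ≤ n := by exact_mod_cast hn
    have := cd_lower hn b (e n) hb0 (hepos n hn)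
    rw [he2 n hn, sub_eq_add_neg (2 * _) (1:ℝ), cd_scale n _ _ (by linarith)] at this
    exact this
  · filter_upwards [eventually_ge_atTop 3] with n hn
    have hn' : (3:ℝ) ≤ n := by exact_mod_cast hn
    have := cd_upper hn b (e n) (hepos n hn)
    rw [he2 n hn, cd_scale n _ _ (by linarith), sub_eq_add_neg b] at this
    exact this
end

section
/- Let C_n be a chord diagram chosen uniformly at random from all chord diagrams of size n. With high probability (probability tending to 1 as n→∞), C_n is monolithic: every chord of C_n not lying in the connected component (with respect to the crossing relation) of the chord containing endpoint 1 is a simple chord, and there is no index i (taken modulo 2n) such that both ⟨i,i+1⟩ and ⟨i+2,i+3⟩ are chords of C_n. -/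
open scoped Classical
open Finset Filter

theorem crosses_symm {n : ℕ} (C : ChordDiagram n) (x u : Fin (2*n)) (h1 : x ≠ u) (h2 : C.1 x ≠ u)
    (h : Crosses C x u) : Crosses C u x := by
  have h3 : x ≠ C.1 u := fun e => h2 (by rw [e]; exact C.2.1 u)
  have h4 : C.1 x ≠ C.1 u := fun e => h1 (by rw [← C.2.1 x, e]; exact C.2.1 u)
  have h5 := C.2.2 x
  have h6 := C.2.2 u
  unfold Crosses Between Xor' at *
  simp only [xor_def] at *
  generalize C.1 x = x' at *
  generalize C.1 u = u' at *
  simp only [ne_eq, Fin.ext_iff, Fin.lt_def, Fin.coe_min, Fin.coe_max] at *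
  omega

theorem crosses_inv {n : ℕ} (C : ChordDiagram n) (x u : Fin (2*n))
    (h : Crosses C x u) : Crosses C x (C.1 u) := by
  unfold Crosses at *
  rw [C.2.1 u]
  exact (xor_comm _ _).mp h

theorem crosses_step {n : ℕ} (C : ChordDiagram n) (y a b : Fin (2*n)) 
    (h1 : a ≠ y) (h2 : a ≠ C.1 y) (ha : ¬ Between y (C.1 y) a) (ha' : ¬ Between y (C.1 y) (C.1 a))
    (hb : Between y (C.1 y) b) (hb' : Between y (C.1 y) (C.1 b)) (h : Crosses C a b) : False := by
  have h3 : C.1 a ≠ y := fun e => h2 (by rw [← e]; exact (C.2.1 a).symm)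
  have h4 : C.1 a ≠ C.1 y := fun e => h1 (by rw [← C.2.1 a, e]; exact C.2.1 y)
  unfold Crosses Between Xor' at *
  simp only [xor_def] at *
  generalize C.1 y = x' at *
  generalize C.1 a = u' at *
  generalize C.1 b = v' at *
  simp only [ne_eq, Fin.ext_iff, Fin.lt_def, Fin.coe_min, Fin.coe_max] at *
  omega

theorem root_inv {n : ℕ} (C : ChordDiagram n) (r x : Fin (2*n)) (h : InRootComponent C r x) :
    InRootComponent C r (C.1 x) := by
  rcases h with h | h | h
  · exact Or.inr (Or.inl (by rw [h]))
  · exact Or.inl (by rw [h, C.2.1])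
  · rcases Relation.ReflTransGen.cases_tail h with h | ⟨c, hc, h⟩
    · exact Or.inr (Or.inl (by rw [h]))
    · exact Or.inr (Or.inr (hc.tail (crosses_inv C _ _ h)))

theorem root_cross {n : ℕ} (C : ChordDiagram n) (r x y : Fin (2*n)) (h : InRootComponent C r x)
    (hc : Crosses C x y) : InRootComponent C r y := by
  rcases h with h | h | h
  · subst h; exact Or.inr (Or.inr (Relation.ReflTransGen.single hc))
  · subst h
    refine Or.inr (Or.inr (Relation.ReflTransGen.single ?_))
    unfold Crosses Between at *
    rw [C.2.1 r, min_comm, max_comm] at hc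
    exact hc
  · exact Or.inr (Or.inr (h.tail hc))

theorem no_between {n : ℕ} (C : ChordDiagram n) (h0 : 0 < 2*n) (y : Fin (2*n))
    (hy : ¬ InRootComponent C ⟨0, h0⟩ y) (p : Fin (2*n)) (hp : InRootComponent C ⟨0, h0⟩ p) :
    ¬ Between y (C.1 y) p := by
  have key : ∀ q, InRootComponent C ⟨0, h0⟩ q → Between y (C.1 y) q → 
      Between y (C.1 y) (C.1 q) := by
    intro q hq hb
    by_contra hn
    have hc : Crosses C y q := Or.inl ⟨hb, hn⟩
    refine hy (root_cross C _ q y hq (crosses_symm C y q ?_ ?_ hc))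
    · rintro rfl; exact hy hq
    · rintro rfl; apply hy; simpa [C.2.1] using root_inv C _ _ hq
  have base : ¬ Between y (C.1 y) ⟨0, h0⟩ := by
    rintro ⟨h, -⟩
    simp [Fin.lt_def] at h
  have hr : InRootComponent C ⟨0, h0⟩ ⟨0, h0⟩ := Or.inl rfl
  rcases hp with h | h | h
  · subst h; exact base
  · subst h; intro hb
    have := key _ (root_inv C _ _ hr) hb
    rw [C.2.1] at this; exact base this
  · induction h with
    | refl => exact base
    | @tail a b hab hc ih =>
      have ha : InRootComponent C ⟨0, h0⟩ a := Or.inr (Or.inr hab)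
      have hb : InRootComponent C ⟨0, h0⟩ b := root_cross C _ _ _ ha hc
      intro hbb
      refine crosses_step C y a b ?_ ?_ ih ?_ hbb (key b hb hbb) hc
      · rintro rfl; exact hy ha
      · rintro rfl; apply hy; simpa [C.2.1] using root_inv C _ _ ha
      · intro h
        have := key _ (root_inv C _ _ ha) h
        rw [C.2.1] at this; exact ih this

theorem gap {n : ℕ} (C : ChordDiagram n) (h0 : 0 < 2*n) (x : Fin (2*n))
    (hx : ¬ InRootComponent C ⟨0, h0⟩ x) :
    ∃ a b : ℕ, 1 ≤ a ∧ a ≤ x ∧ (x:ℕ) < b ∧ b ≤ 2*n ∧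
      ∀ y : Fin (2*n), a ≤ y → (y:ℕ) < b → a ≤ C.1 y ∧ (C.1 y : ℕ) < b := by
  -- predecessor
  let P : ℕ → Prop := fun m => ∃ h : m < 2*n, InRootComponent C ⟨0, h0⟩ ⟨m, h⟩
  have hP0 : P 0 := ⟨h0, Or.inl rfl⟩
  have hPx : ¬ P x := by rintro ⟨h, h'⟩; exact hx h'
  let a0 := Nat.findGreatest P x
  have ha0 : P a0 := Nat.findGreatest_spec (Nat.zero_le _) hP0
  have ha0x : a0 ≤ x := Nat.findGreatest_le _
  have hamax : ∀ m, a0 < m → m ≤ x → ¬ P m := fun m h1 h2 => Nat.findGreatest_is_greatest h1 h2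
  have hb : ∃ b, (x:ℕ) < b ∧ (P b ∨ b = 2*n) := ⟨2*n, x.2, Or.inr rfl⟩
  let b := Nat.find hb
  obtain ⟨hb1, hb2⟩ := Nat.find_spec hb
  have hbmin : ∀ m, m < b → (x:ℕ) < m → ¬ P m := fun m h1 h2 h3 => Nat.find_min hb h1 ⟨h2, Or.inl h3⟩
  have hb2n : b ≤ 2*n := Nat.find_min' hb ⟨x.2, Or.inr rfl⟩
  have hne : a0 ≠ x := by intro e; rw [e] at ha0; exact hPx ha0
  refine ⟨a0+1, b, by omega, by omega, hb1, hb2n, ?_⟩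
  intro y hy1 hy2
  have hyP : ¬ P y := by
    rcases lt_or_ge (x:ℕ) y with h | h
    · exact hbmin _ hy2 h
    · exact hamax _ (by omega) h
  have hyK : ¬ InRootComponent C ⟨0, h0⟩ y := fun h => hyP ⟨y.2, h⟩
  have hCyP : ¬ P (C.1 y) := by
    rintro ⟨_, h⟩; apply hyK; simpa [C.2.1] using root_inv C _ _ h
  constructor
  · by_contra hlt
    obtain ⟨hA, hA'⟩ := ha0
    have hne' : (C.1 y : ℕ) ≠ a0 := by intro e; rw [e] at hCyP; exact hCyP ⟨hA, hA'⟩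
    refine no_between C h0 y hyK _ hA' ?_
    unfold Between
    simp only [Fin.lt_def, Fin.coe_min, Fin.coe_max]
    omega
  · by_contra hlt
    have hlt2 := (C.1 y).2
    rcases hb2 with hB | hB
    · obtain ⟨hA, hA'⟩ := hB
      have hne' : (C.1 y : ℕ) ≠ b := by intro e; rw [e] at hCyP; exact hCyP ⟨hA, hA'⟩
      refine no_between C h0 y hyK _ hA' ?_
      unfold Between
      simp only [Fin.lt_def, Fin.coe_min, Fin.coe_max]
      change min _ _ < b ∧ b < _
      omega
    · change b = 2*n at hB
      omega

abbrev FInv (α : Type) := {f : α → α // (∀ i, f (f i) = i) ∧ ∀ i, f i ≠ i}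

theorem cycleType_finv {α : Type} [Fintype α] (f : FInv α) (k : ℕ) (hk : Fintype.card α = 2*k) :
    (Function.Involutive.toPerm f.1 f.2.1).cycleType = Multiset.replicate k 2 := by
  set σ := Function.Involutive.toPerm f.1 f.2.1 with hσ
  have h2 : σ ^ 2 = 1 := by
    ext i; rw [pow_two]; exact f.2.1 i
  have : Fact (Nat.Prime 2) := ⟨Nat.prime_two⟩
  have h := Equiv.Perm.cycleType_of_pow_prime_eq_one h2
  have hs := σ.sum_cycleType
  have hsup : σ.support = Finset.univ := by
    ext i; simp only [Equiv.Perm.mem_support, Finset.mem_univ, iff_true]; exact f.2.2 i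
  rw [hsup, Finset.card_univ, hk, h, Multiset.sum_replicate] at hs
  rw [h]; congr 1; simp at hs; omega

theorem even_finv {α : Type} [Fintype α] (f : FInv α) : Even (Fintype.card α) := by
  set σ := Function.Involutive.toPerm f.1 f.2.1 with hσ
  have h2 : σ ^ 2 = 1 := by
    ext i; rw [pow_two]; exact f.2.1 i
  have : Fact (Nat.Prime 2) := ⟨Nat.prime_two⟩
  have h := Equiv.Perm.cycleType_of_pow_prime_eq_one h2
  have hs := σ.sum_cycleType
  have hsup : σ.support = Finset.univ := by
    ext i; simp only [Equiv.Perm.mem_support, Finset.mem_univ, iff_true]; exact f.2.2 i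
  rw [hsup, Finset.card_univ, h, Multiset.sum_replicate] at hs
  rw [← hs]; simp

theorem card_finv {α : Type} [Fintype α] (k : ℕ) (hk : Fintype.card α = 2*k) :
    Nat.card (FInv α) * (2^k * k.factorial) = (2*k).factorial := by
  have h := Equiv.Perm.card_of_cycleType_mul_eq α (Multiset.replicate k 2)
  have hb : Nat.card (FInv α) = 
     (Finset.univ.filter fun g : Equiv.Perm α => g.cycleType = Multiset.replicate k 2).card := by
    rw [Nat.card_eq_fintype_card, ← Finset.card_univ]
    refine Finset.card_bij (fun f _ => Function.Involutive.toPerm f.1 f.2.1) ?_ ?_ ?_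
    · intro f _
      simp only [Finset.mem_filter, Finset.mem_univ, true_and]
      exact cycleType_finv f k hk
    · intro f _ g _ e
      apply Subtype.ext
      exact congrArg (fun s : Equiv.Perm α => (s : α → α)) e
    · intro s hs
      simp only [Finset.mem_filter, Finset.mem_univ, true_and] at hs
      have : Fact (Nat.Prime 2) := ⟨Nat.prime_two⟩
      have h2 : s ^ 2 = 1 := by
        rw [Equiv.Perm.pow_prime_eq_one_iff, hs]
        intro c hc; exact Multiset.eq_of_mem_replicate hc
      have hsup : s.support = Finset.univ := by
        rw [← Finset.card_eq_iff_eq_univ, ← s.sum_cycleType, hs, hk]; simp [mul_comm]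
      refine ⟨⟨s, ?_, ?_⟩, Finset.mem_univ _, ?_⟩
      · intro i
        have := congrArg (fun s : Equiv.Perm α => s i) h2
        simpa [pow_two] using this
      · intro i
        rw [← Equiv.Perm.mem_support, hsup]; simp
      · ext; rfl
  have hcond : ((Multiset.replicate k 2).sum ≤ Fintype.card α ∧ ∀ a ∈ Multiset.replicate k 2, 2 ≤ a) := by
    constructor
    · simp [hk, mul_comm]
    · intro a ha; rw [Multiset.eq_of_mem_replicate ha]
  rw [if_pos hcond] at h
  rw [← hk, ← h, hb]
  congr 1
  rcases Nat.eq_zero_or_pos k with rfl | hkp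
  · simp [hk]
  · have : (Multiset.replicate k 2).toFinset = {2} := by
      rw [Multiset.toFinset_replicate, if_neg (by omega)]
    rw [this]
    simp [hk, mul_comm]

theorem closed_compl {α : Type} (f : FInv α) (S : Finset α) (h : ∀ x ∈ S, f.1 x ∈ S) 
    (x : α) (hx : x ∉ S) : f.1 x ∉ S := by
  intro h'
  apply hx
  have := h _ h'
  rwa [f.2.1] at this

theorem even_closed {α : Type} (f : FInv α) (S : Finset α) (h : ∀ x ∈ S, f.1 x ∈ S) :
    Even S.card := by
  have := even_finv (α := {x // x ∈ S}) 
    ⟨fun x => ⟨f.1 x.1, h _ x.2⟩, fun x => Subtype.ext (f.2.1 x.1), 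
      fun x e => f.2.2 x.1 (congrArg Subtype.val e)⟩
  simpa using this

theorem card_closed_le {α : Type} [Fintype α] (S : Finset α) :
    (Finset.univ.filter fun f : FInv α => ∀ x ∈ S, f.1 x ∈ S).card ≤ 
      Nat.card (FInv {x // x ∈ S}) * Nat.card (FInv {x // x ∉ S}) := by
  rw [← Nat.card_prod, ← Fintype.card_subtype, ← Nat.card_eq_fintype_card]
  refine Nat.card_le_card_of_injective (fun f => 
    (⟨fun x => ⟨f.1.1 x.1, f.2 _ x.2⟩, fun x => Subtype.ext (f.1.2.1 x.1), 
      fun x e => f.1.2.2 x.1 (congrArg Subtype.val e)⟩,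
     ⟨fun x => ⟨f.1.1 x.1, closed_compl f.1 S f.2 _ x.2⟩, fun x => Subtype.ext (f.1.2.1 x.1), 
      fun x e => f.1.2.2 x.1 (congrArg Subtype.val e)⟩)) ?_
  intro f g e
  simp only [Prod.mk.injEq, Subtype.mk.injEq] at e
  apply Subtype.ext; apply Subtype.ext; funext x
  by_cases hx : x ∈ S
  · exact congrArg Subtype.val (congrFun e.1 ⟨x, hx⟩)
  · exact congrArg Subtype.val (congrFun e.2 ⟨x, hx⟩)

theorem choose_sq_le (n k : ℕ) : n.choose k * n.choose k ≤ (2*n).choose (2*k) := by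
  rw [two_mul n, Nat.add_choose_eq]
  exact Finset.single_le_sum (f := fun ij : ℕ × ℕ => n.choose ij.1 * n.choose ij.2) 
    (fun _ _ => Nat.zero_le _) 
    (show (k, k) ∈ Finset.HasAntidiagonal.antidiagonal (2*k) by simp [two_mul])

theorem arith_bound (n k : ℕ) (hk : k ≤ n) (X A B T : ℕ) (h1 : X ≤ A * B)
    (hA : A * (2^k * k.factorial) = (2*k).factorial)
    (hB : B * (2^(n-k) * (n-k).factorial) = (2*(n-k)).factorial)
    (hC : T * (2^n * n.factorial) = (2*n).factorial) : X * n.choose k ≤ T := by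
  have hn := Nat.choose_mul_factorial_mul_factorial hk
  have h2n := Nat.choose_mul_factorial_mul_factorial (show 2*k ≤ 2*n by omega)
  rw [show 2*n - 2*k = 2*(n-k) by omega] at h2n
  have hsq := choose_sq_le n k
  have hp : 2^n = 2^k * 2^(n-k) := by rw [← pow_add]; congr 1; omega
  have hpos : 0 < n.choose k := Nat.choose_pos hk
  have e : T * n.choose k = (2*n).choose (2*k) * (A * B) := by
    have hq : 0 < 2^n * (k.factorial * (n-k).factorial) := by positivity
    apply Nat.eq_of_mul_eq_mul_right hq
    calc T * n.choose k * (2^n * (k.factorial * (n-k).factorial)) 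
        = T * (2^n * (n.choose k * k.factorial * (n-k).factorial)) := by ring
      _ = (2*n).choose (2*k) * (A * (2^k * k.factorial)) * (B * (2^(n-k) * (n-k).factorial)) := by
        rw [hn, hC, hA, hB, h2n]
      _ = _ := by rw [hp]; ring
  refine le_trans (Nat.mul_le_mul_right _ h1) ?_
  refine Nat.le_of_mul_le_mul_right ?_ hpos
  rw [e]
  calc A * B * n.choose k * n.choose k = n.choose k * n.choose k * (A*B) := by ring
    _ ≤ _ := Nat.mul_le_mul_right _ hsq

/-- Number of diagrams for which the set `S` is closed. -/
noncomputable def closedCount (n : ℕ) (S : Finset (Fin (2*n))) : ℕ :=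
  (Finset.univ.filter fun f : ChordDiagram n => ∀ x ∈ S, f.1 x ∈ S).card

theorem closed_bound (n k : ℕ) (hk : k ≤ n) (S : Finset (Fin (2*n))) (hS : S.card = 2*k) :
    closedCount n S * n.choose k ≤ Nat.card (ChordDiagram n) := by
  have h1 : closedCount n S ≤ Nat.card (FInv {x // x ∈ S}) * Nat.card (FInv {x // x ∉ S}) := by
    have := card_closed_le S
    unfold closedCount
    convert this
  have hA := card_finv (α := {x // x ∈ S}) k (by simpa using hS)
  have hB := card_finv (α := {x // x ∉ S}) (n-k) (by 
    rw [Fintype.card_subtype_compl]; simp [hS]; omega)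
  have hC := card_finv (α := Fin (2*n)) n (by simp)
  exact arith_bound n k hk _ _ _ _ h1 hA hB hC

theorem choose_three_le (n k : ℕ) (h1 : 3 ≤ k) (h2 : k + 3 ≤ n) : n.choose 3 ≤ n.choose k := by
  induction n generalizing k with
  | zero => omega
  | succ n ih =>
    rcases Nat.lt_or_ge n (k+3) with h | h
    · have : n + 1 = k + 3 := by omega
      rw [this, Nat.choose_symm_add]
    · rcases Nat.eq_or_lt_of_le h1 with e | e
      · rw [← e]
      · obtain ⟨j, rfl⟩ : ∃ j, k = j + 1 := ⟨k-1, by omega⟩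
        rw [Nat.choose_succ_succ n j, Nat.choose_succ_succ n 2]
        have := ih (j+1) h1 h
        have h3 := ih j (by omega) (by omega)
        have h4 : n.choose 2 ≤ n.choose 3 := by
          have h5 := Nat.choose_succ_right_eq n 2
          have h6 : 3 ≤ n - 2 := by omega
          nlinarith
        simp only [Nat.succ_eq_add_one, Nat.reduceAdd]
        omega

theorem term_bound (n k : ℕ) (hn : 12 ≤ n) (h1 : 2 ≤ k) (h2 : k ≤ n - 1) :
    ((n:ℝ) - k) / n.choose k ≤ 24 / (n:ℝ)^2 + (if k = 2 then 4/(n:ℝ) else 0) 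
      + (if k = n - 1 then 1/(n:ℝ) else 0) := by
  have hnR : (12:ℝ) ≤ n := by exact_mod_cast hn
  have hc2 : ((n.choose 2 : ℕ) : ℝ) = n * (n-1) / 2 := Nat.cast_choose_two ℝ n
  have hkp : (0:ℝ) < n.choose k := by exact_mod_cast Nat.choose_pos (by omega)
  by_cases e1 : k = n - 1
  · have e2 : k ≠ 2 := by omega
    rw [if_neg e2, if_pos e1]
    have : n.choose k = n := by
      rw [e1, Nat.choose_symm (by omega)]; simp
    rw [this]
    have : (n:ℝ) - k = 1 := by rw [e1, Nat.cast_sub (by omega)]; simp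
    rw [this]
    have : (0:ℝ) ≤ 24 / (n:ℝ)^2 := by positivity
    linarith
  rw [if_neg e1]
  by_cases e2 : k = 2
  · subst e2
    rw [if_pos rfl, hc2]
    have : ((n:ℝ) - (2:ℕ)) / (n * (n-1)/2) ≤ 4 / n := by
      rw [div_le_div_iff₀ (by nlinarith) (by linarith)]
      push_cast; nlinarith
    have : (0:ℝ) ≤ 24 / (n:ℝ)^2 := by positivity
    linarith
  rw [if_neg e2, add_zero, add_zero]
  by_cases e3 : k = n - 2
  · have e4 : n.choose k = n.choose 2 := by
      rw [e3, Nat.choose_symm (by omega)]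
    have e5 : (n:ℝ) - k = 2 := by rw [e3, Nat.cast_sub (by omega)]; simp
    rw [e4, e5, hc2, div_le_div_iff₀ (by nlinarith) (by nlinarith)]
    nlinarith
  · have h3 : n.choose 3 ≤ n.choose k := choose_three_le n k (by omega) (by omega)
    have h3' : ((n.choose 3 : ℕ):ℝ) ≤ n.choose k := by exact_mod_cast h3
    have h5 := Nat.choose_succ_right_eq n 2
    have h6 : ((n.choose 3 : ℕ):ℝ) * 3 = n.choose 2 * (n - 2) := by
      have := congrArg (Nat.cast (R := ℝ)) h5
      push_cast [Nat.cast_sub (show 2 ≤ n by omega)] at this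
      linarith
    rw [hc2] at h6
    have hk0 : (0:ℝ) ≤ k := by positivity
    rw [div_le_div_iff₀ hkp (by nlinarith)]
    have h7 : (n:ℝ)^2 ≤ 4 * ((n-1) * (n-2)) := by nlinarith
    have h8 : 24 * ((n.choose 3 : ℕ):ℝ) = 4 * (n * ((n-1) * (n-2))) := by linarith
    calc ((n:ℝ) - k) * (n:ℝ)^2 ≤ (n:ℝ) * (n:ℝ)^2 := by
            apply mul_le_mul_of_nonneg_right _ (by positivity); linarith
      _ ≤ (n:ℝ) * (4 * ((n-1) * (n-2))) := by
            apply mul_le_mul_of_nonneg_left h7; positivity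
      _ = 24 * ((n.choose 3 : ℕ):ℝ) := by rw [h8]; ring
      _ ≤ _ := by linarith

theorem sum_bound (n : ℕ) (hn : 12 ≤ n) :
    ∑ k ∈ Finset.Icc 2 (n-1), ((n:ℝ) - k) / n.choose k ≤ 29 / n := by
  have hnR : (0:ℝ) < n := by exact_mod_cast (by omega : 0 < n)
  calc _ ≤ ∑ k ∈ Finset.Icc 2 (n-1), (24 / (n:ℝ)^2 + (if k = 2 then 4/(n:ℝ) else 0) 
      + (if k = n - 1 then 1/(n:ℝ) else 0)) := by
        apply Finset.sum_le_sum
        intro k hk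
        rw [Finset.mem_Icc] at hk
        exact term_bound n k hn hk.1 hk.2
    _ ≤ n * (24 / (n:ℝ)^2) + 4/n + 1/n := by
        rw [Finset.sum_add_distrib, Finset.sum_add_distrib, Finset.sum_ite_eq', Finset.sum_ite_eq',
          if_pos (Finset.mem_Icc.mpr ⟨le_rfl, by omega⟩), 
          if_pos (Finset.mem_Icc.mpr ⟨by omega, le_rfl⟩), Finset.sum_const, nsmul_eq_mul]
        have : ((Finset.Icc 2 (n-1)).card : ℝ) ≤ n := by
          simp only [Nat.card_Icc]; exact_mod_cast (by omega)
        have h := mul_le_mul_of_nonneg_right this (show (0:ℝ) ≤ 24/(n:ℝ)^2 by positivity)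
        linarith
    _ = 29 / n := by field_simp; norm_num


/-- The endpoints with index in `[a, b)`. -/
noncomputable def ivl (n a b : ℕ) : Finset (Fin (2*n)) :=
  Finset.univ.filter fun x => a ≤ (x:ℕ) ∧ (x:ℕ) < b

theorem card_ivl (n a b : ℕ) (h : b ≤ 2*n) : (ivl n a b).card = b - a := by
  rw [← Nat.card_Ico, ← Finset.card_map Fin.valEmbedding]
  congr 1
  ext m
  simp only [ivl, Finset.mem_map, Finset.mem_filter, Finset.mem_univ, true_and, Fin.valEmbedding_apply,
    Finset.mem_Ico]
  constructor
  · rintro ⟨x, hx, rfl⟩; exact hx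
  · intro hm; exact ⟨⟨m, by omega⟩, hm, rfl⟩

/-- The cyclic block of four consecutive endpoints starting at `i`. -/
noncomputable def cyc (n : ℕ) (i : Fin (2*n)) : Finset (Fin (2*n)) :=
  (Finset.range 4).image fun t => ⟨((i:ℕ) + t) % (2*n), Nat.mod_lt _ (by have := i.2; omega)⟩

theorem card_cyc (n : ℕ) (hn : 2 ≤ n) (i : Fin (2*n)) : (cyc n i).card = 2*2 := by
  unfold cyc
  rw [Finset.card_image_of_injOn]
  · simp
  · intro s hs t ht e
    simp only [Finset.coe_range, Set.mem_Iio] at hs ht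
    have e' : ((i:ℕ) + s) % (2*n) = ((i:ℕ) + t) % (2*n) := congrArg Fin.val e
    have := Nat.ModEq.add_left_cancel' (i:ℕ) (show (i:ℕ) + s ≡ (i:ℕ) + t [MOD (2*n)] from e')
    unfold Nat.ModEq at this
    rwa [Nat.mod_eq_of_lt (by omega), Nat.mod_eq_of_lt (by omega)] at this

theorem cyc_closed {n : ℕ} (C : ChordDiagram n) (i j : Fin (2*n))
    (h1 : (C.1 i : ℕ) = ((i : ℕ) + 1) % (2*n)) (hj : (j : ℕ) = ((i : ℕ) + 2) % (2*n))
    (h2 : (C.1 j : ℕ) = ((i : ℕ) + 3) % (2*n)) : ∀ x ∈ cyc n i, C.1 x ∈ cyc n i := by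
  have hi : (i:ℕ) = ((i:ℕ) + 0) % (2*n) := by rw [add_zero, Nat.mod_eq_of_lt i.2]
  have mem : ∀ y : Fin (2*n), ∀ t < 4, (y:ℕ) = ((i:ℕ)+t) % (2*n) → y ∈ cyc n i := by
    intro y t ht e
    exact Finset.mem_image.mpr ⟨t, Finset.mem_range.mpr ht, Fin.ext e.symm⟩
  intro x hx
  obtain ⟨t, ht, rfl⟩ := Finset.mem_image.mp hx
  rw [Finset.mem_range] at ht
  interval_cases t
  · rw [show (⟨((i:ℕ) + 0) % (2*n), Nat.mod_lt _ (by have := i.2; omega)⟩ : Fin (2*n)) = i from Fin.ext hi.symm]; exact mem _ 1 (by omega) h1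
  · rw [show (⟨((i:ℕ) + 1) % (2*n), Nat.mod_lt _ (by have := i.2; omega)⟩ : Fin (2*n)) = C.1 i from Fin.ext h1.symm, C.2.1]; exact mem _ 0 (by omega) hi
  · rw [show (⟨((i:ℕ) + 2) % (2*n), Nat.mod_lt _ (by have := i.2; omega)⟩ : Fin (2*n)) = j from Fin.ext hj.symm]; exact mem _ 3 (by omega) h2
  · rw [show (⟨((i:ℕ) + 3) % (2*n), Nat.mod_lt _ (by have := i.2; omega)⟩ : Fin (2*n)) = C.1 j from Fin.ext h2.symm, C.2.1]; exact mem _ 2 (by omega) hj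

theorem bad_cover {n : ℕ} (C : ChordDiagram n) (h0 : 0 < 2*n) (hM : ¬ Monolithic C ⟨0, h0⟩) :
    (∃ k ∈ Finset.Icc 2 (n-1), ∃ a ∈ Finset.Icc 1 (2*(n-k)),
      ∀ x ∈ ivl n a (a+2*k), C.1 x ∈ ivl n a (a+2*k)) ∨
    ∃ i : Fin (2*n), ∀ x ∈ cyc n i, C.1 x ∈ cyc n i := by
  unfold Monolithic at hM
  rw [not_and_or, not_not] at hM
  rcases hM with hM | ⟨i, h1, j, hj, h2⟩
  · left
    push Not at hM
    obtain ⟨x, hx, hs⟩ := hM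
    obtain ⟨a, b, ha1, hax, hxb, hb, hcl⟩ := gap C h0 x hx
    have hcl' : ∀ y ∈ ivl n a b, C.1 y ∈ ivl n a b := by
      intro y hy
      simp only [ivl, Finset.mem_filter, Finset.mem_univ, true_and] at *
      exact hcl y hy.1 hy.2
    have hev := even_closed C _ hcl'
    rw [card_ivl n a b hb] at hev
    obtain ⟨k, hk⟩ := hev
    have hk2 : 2 ≤ k := by
      by_contra hlt
      have hCx := hcl x hax hxb
      have hne : (C.1 x : ℕ) ≠ x := fun e => C.2.2 x (Fin.ext e)
      apply hs
      unfold IsSimple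
      rcases Nat.lt_or_ge (x:ℕ) (C.1 x) with h | h
      · left; rw [Nat.mod_eq_of_lt] <;> omega
      · right; rw [Nat.mod_eq_of_lt] <;> omega
    have hbb : b = a + 2*k := by omega
    subst hbb
    exact ⟨k, Finset.mem_Icc.mpr (by omega), a, Finset.mem_Icc.mpr (by omega), hcl'⟩
  · right
    exact ⟨i, cyc_closed C i j h1 hj h2⟩

theorem bad_count (n : ℕ) (h0 : 0 < 2*n) :
    (Finset.univ.filter fun C : ChordDiagram n => ¬ Monolithic C ⟨0, h0⟩).card ≤
     (∑ k ∈ Finset.Icc 2 (n-1), ∑ a ∈ Finset.Icc 1 (2*(n-k)), closedCount n (ivl n a (a+2*k))) +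
      ∑ i : Fin (2*n), closedCount n (cyc n i) := by
  have hsub : (Finset.univ.filter fun C : ChordDiagram n => ¬ Monolithic C ⟨0, h0⟩) ⊆
    ((Finset.Icc 2 (n-1)).biUnion fun k => (Finset.Icc 1 (2*(n-k))).biUnion fun a =>
      Finset.univ.filter fun C : ChordDiagram n => 
        ∀ x ∈ ivl n a (a+2*k), C.1 x ∈ ivl n a (a+2*k)) ∪
    (Finset.univ.biUnion fun i : Fin (2*n) => 
      Finset.univ.filter fun C : ChordDiagram n => ∀ x ∈ cyc n i, C.1 x ∈ cyc n i) := by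
    intro C hC
    have := bad_cover C h0 (Finset.mem_filter.mp hC).2
    simp only [Finset.mem_union, Finset.mem_biUnion, Finset.mem_filter, Finset.mem_univ, true_and]
    exact this
  refine (Finset.card_le_card hsub).trans ((Finset.card_union_le _ _).trans ?_)
  refine add_le_add ?_ Finset.card_biUnion_le
  refine Finset.card_biUnion_le.trans (Finset.sum_le_sum fun k _ => ?_)
  exact Finset.card_biUnion_le

theorem bad_real (n : ℕ) (hn : 12 ≤ n) (h0 : 0 < 2*n) :
    ((Finset.univ.filter fun C : ChordDiagram n => ¬ Monolithic C ⟨0, h0⟩).card : ℝ) ≤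
      (66 / n) * Nat.card (ChordDiagram n) := by
  have hnR : (12:ℝ) ≤ n := by exact_mod_cast hn
  set T : ℝ := ((Nat.card (ChordDiagram n) : ℕ) : ℝ) with hT
  have hT0 : 0 ≤ T := by positivity
  have cb : ∀ k ≤ n, ∀ S : Finset (Fin (2*n)), S.card = 2*k → 
      (closedCount n S : ℝ) ≤ T / n.choose k := by
    intro k hk S hS
    rw [le_div_iff₀ (by exact_mod_cast Nat.choose_pos hk)]
    rw [hT]
    exact_mod_cast closed_bound n k hk S hS
  have h := bad_count n h0
  have h' : ((Finset.univ.filter fun C : ChordDiagram n => ¬ Monolithic C ⟨0, h0⟩).card : ℝ) ≤ 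
     (∑ k ∈ Finset.Icc 2 (n-1), ∑ a ∈ Finset.Icc 1 (2*(n-k)), 
        (closedCount n (ivl n a (a+2*k)) : ℝ)) +
      ∑ i : Fin (2*n), (closedCount n (cyc n i) : ℝ) := by exact_mod_cast h
  refine h'.trans ?_
  have hA : (∑ k ∈ Finset.Icc 2 (n-1), ∑ a ∈ Finset.Icc 1 (2*(n-k)), 
        (closedCount n (ivl n a (a+2*k)) : ℝ)) ≤ 2 * T * (29 / n) := by
    refine le_trans ?_ (mul_le_mul_of_nonneg_left (sum_bound n hn) (by positivity))
    rw [Finset.mul_sum]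
    refine Finset.sum_le_sum fun k hk => ?_
    rw [Finset.mem_Icc] at hk
    calc _ ≤ ∑ a ∈ Finset.Icc 1 (2*(n-k)), T / n.choose k := by
            refine Finset.sum_le_sum fun a ha => ?_
            rw [Finset.mem_Icc] at ha
            refine cb k (by omega) _ ?_
            rw [card_ivl n _ _ (by omega)]; omega
      _ = _ := by
            rw [Finset.sum_const, nsmul_eq_mul, Nat.card_Icc, Nat.add_sub_cancel]
            push_cast [Nat.cast_sub (show k ≤ n by omega)]
            ring
  have hB : ∑ i : Fin (2*n), (closedCount n (cyc n i) : ℝ) ≤ T * (8 / n) := by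
    calc _ ≤ ∑ i : Fin (2*n), T / n.choose 2 := 
            Finset.sum_le_sum fun i _ => cb 2 (by omega) _ (card_cyc n (by omega) i)
      _ = T * ((2*n) / n.choose 2) := by
            rw [Finset.sum_const, nsmul_eq_mul, Finset.card_univ, Fintype.card_fin]
            push_cast; ring
      _ ≤ _ := by
            refine mul_le_mul_of_nonneg_left ?_ hT0
            rw [Nat.cast_choose_two, div_le_div_iff₀ (by nlinarith) (by linarith)]
            nlinarith
  calc _ ≤ 2 * T * (29 / n) + T * (8 / n) := add_le_add hA hB
    _ = _ := by ring

theorem prob_le_one' (n : ℕ) (E : ChordDiagram n → Prop) : prob n E ≤ 1 := by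
  unfold prob
  apply div_le_one_of_le₀
  · exact_mod_cast Finset.card_le_card (Finset.filter_subset _ _)
  · positivity

theorem le_prob (n : ℕ) (E : ChordDiagram n → Prop) (ε : ℝ) (hT : 0 < Nat.card (ChordDiagram n))
    (h : ((Finset.univ.filter fun C : ChordDiagram n => ¬ E C).card : ℝ) ≤
      ε * Nat.card (ChordDiagram n)) : 1 - ε ≤ prob n E := by
  have hTR : (0:ℝ) < Nat.card (ChordDiagram n) := by exact_mod_cast hT
  have hs := Finset.card_filter_add_card_filter_not (s := (Finset.univ : Finset (ChordDiagram n))) E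
  have hs' := congrArg (Nat.cast (R := ℝ)) hs
  push_cast at hs'
  unfold prob
  rw [Finset.card_univ, ← Nat.card_eq_fintype_card] at *
  rw [le_div_iff₀ hTR]
  linarith

theorem stmt2 :
    Filter.Tendsto
      (fun n : ℕ => prob n (fun C => ∀ h : 0 < 2*n, Monolithic C ⟨0, h⟩))
      Filter.atTop (nhds 1) := by
  have hlim : Filter.Tendsto (fun n : ℕ => 1 - 66 / (n:ℝ)) Filter.atTop (nhds 1) := by
    have := (tendsto_const_div_atTop_nhds_zero_nat (66:ℝ)).const_sub 1
    simpa using this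
  refine tendsto_of_tendsto_of_tendsto_of_le_of_le' hlim tendsto_const_nhds ?_ ?_
  · filter_upwards [Filter.eventually_ge_atTop 12] with n hn
    have h0 : 0 < 2*n := by omega
    have hb := bad_real n hn h0
    have hTpos : 0 < Nat.card (ChordDiagram n) := by
      have hC := card_finv (α := Fin (2*n)) n (by simp)
      rcases Nat.eq_zero_or_pos (Nat.card (ChordDiagram n)) with e | e
      · change Nat.card (ChordDiagram n) * _ = _ at hC
        rw [e, zero_mul] at hC
        exact absurd hC.symm (Nat.factorial_ne_zero _)
      · exact e
    have e : (fun C : ChordDiagram n => ∀ h : 0 < 2*n, Monolithic C ⟨0, h⟩) =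
        fun C : ChordDiagram n => Monolithic C ⟨0, h0⟩ := by
      funext C; exact propext ⟨fun h => h h0, fun h _ => h⟩
    rw [e]
    exact le_prob n _ _ hTpos hb
  · filter_upwards with n
    exact prob_le_one' n _
end

section
/- Fix an integer j ≥ 0 and let L_j denote the number of chords of length j in the uniformly random chord diagram C_n of size n. Then L_j converges in distribution to a Poisson random variable with mean 1 as n→∞; that is, for every integer m ≥ 0, lim_{n→∞} P(L_j = m) = e^{−1}/m!. -/
open scoped Classical
open Finset Filter

/-- Agreement set of `C` with `s`. -/
noncomputable def agreeSet {n : ℕ} (s : Equiv.Perm (Fin (2*n))) (C : ChordDiagram n) :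
    Finset (Fin (2*n)) := Finset.univ.filter fun v => C.1 v = s v

/-- Diagrams agreeing with `s` on `S`. -/
noncomputable def extSet {n : ℕ} (s : Equiv.Perm (Fin (2*n))) (S : Finset (Fin (2*n))) :
    Finset (ChordDiagram n) := Finset.univ.filter fun C => S ⊆ agreeSet s C

theorem mem_extSet {n : ℕ} (s : Equiv.Perm (Fin (2*n))) (S : Finset (Fin (2*n)))
    (C : ChordDiagram n) : C ∈ extSet s S ↔ ∀ v ∈ S, C.1 v = s v := by
  simp [extSet, agreeSet, Finset.subset_iff]

/-- Conjugation of a diagram by a permutation. -/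
def conjD {n : ℕ} (t : Equiv.Perm (Fin (2*n))) (C : ChordDiagram n) : ChordDiagram n :=
  ⟨fun x => t (C.1 (t.symm x)), by
    refine ⟨fun i => ?_, fun i h => ?_⟩
    · simp [C.2.1]
    · apply C.2.2 (t.symm i)
      have h' := congrArg t.symm h
      simpa using h'⟩

theorem ext_le {n : ℕ} (s : Equiv.Perm (Fin (2*n))) (S : Finset (Fin (2*n)))
    (v w w' : Fin (2*n)) (hv : v ∉ S)
    (hw : w ∉ S ∪ S.image s) (hw' : w' ∉ S ∪ S.image s) (hwv : w ≠ v) (hwv' : w' ≠ v) :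
    ((extSet s S).filter fun C => C.1 v = w).card ≤
      ((extSet s S).filter fun C => C.1 v = w').card := by
  apply Finset.card_le_card_of_injOn (conjD (Equiv.swap w w'))
  · intro C hC
    simp only [Finset.coe_filter, Set.mem_setOf_eq, mem_extSet] at hC ⊢
    simp only [Finset.mem_union, Finset.mem_image, not_or, not_exists, not_and] at hw hw'
    refine ⟨fun u hu => ?_, ?_⟩
    · have h1 : u ≠ w := fun h => hw.1 (h ▸ hu)
      have h2 : u ≠ w' := fun h => hw'.1 (h ▸ hu)
      have h3 := hw.2 u hu
      have h4 := hw'.2 u hu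
      simp only [conjD, Equiv.symm_swap, Equiv.swap_apply_of_ne_of_ne h1 h2, hC.1 u hu,
        Equiv.swap_apply_of_ne_of_ne h3 h4]
    · simp only [conjD, Equiv.symm_swap, Equiv.swap_apply_of_ne_of_ne hwv.symm hwv'.symm, hC.2,
        Equiv.swap_apply_left]
  · intro C _ D _ h
    apply Subtype.ext
    funext x
    have := congrFun (congrArg Subtype.val h) ((Equiv.swap w w') x)
    simpa [conjD] using this

theorem ext_insert {n : ℕ} (s : Equiv.Perm (Fin (2*n))) (S : Finset (Fin (2*n)))
    (v : Fin (2*n)) (hd : Disjoint S (S.image s)) (hv : v ∉ S ∪ S.image s)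
    (hsv : s v ∉ S ∪ S.image s) (hne : s v ≠ v) :
    ((2*n : ℝ) - 2 * S.card - 1) * ((extSet s (insert v S)).card : ℝ)
      = (extSet s S).card := by
  have hvS : v ∉ S := fun h => hv (Finset.mem_union_left _ h)
  have e1 : extSet s (insert v S) = (extSet s S).filter fun C => C.1 v = s v := by
    ext C
    simp only [Finset.mem_filter, mem_extSet, Finset.mem_insert, forall_eq_or_imp]
    tauto
  have e2 := Finset.card_eq_sum_card_fiberwise (f := fun C : ChordDiagram n => C.1 v)
    (s := extSet s S) (t := (insert v (S ∪ S.image s))ᶜ) (by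
      intro C hC
      have hC' := (mem_extSet s S C).1 hC
      simp only [Finset.coe_compl, Set.mem_compl_iff, Finset.mem_coe, Finset.mem_insert,
        Finset.mem_union, Finset.mem_image, not_or, not_exists, not_and]
      refine ⟨C.2.2 v, fun h => ?_, fun u hu h => ?_⟩
      · apply hv
        have := hC' _ h
        rw [C.2.1] at this
        rw [this]
        exact Finset.mem_union_right _ (Finset.mem_image_of_mem _ h)
      · apply hvS
        rw [← hC' u hu] at h
        have := congrArg C.1 h
        rw [C.2.1, C.2.1] at this
        exact this ▸ hu)
  have e3 : ∀ w ∈ (insert v (S ∪ S.image s))ᶜ,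
      ((extSet s S).filter fun C => C.1 v = w).card = (extSet s (insert v S)).card := by
    intro w hw
    simp only [Finset.mem_compl, Finset.mem_insert, not_or] at hw
    rw [e1]
    exact le_antisymm (ext_le s S v w (s v) hvS hw.2 hsv hw.1 hne)
      (ext_le s S v (s v) w hvS hsv hw.2 hne hw.1)
  rw [Finset.sum_congr rfl e3, Finset.sum_const, smul_eq_mul] at e2
  have e4 : (insert v (S ∪ S.image s)).card = 2 * S.card + 1 := by
    rw [Finset.card_insert_of_notMem hv, Finset.card_union_of_disjoint hd,
      Finset.card_image_of_injective _ s.injective]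
    ring
  have e5 := Finset.card_add_card_compl (insert v (S ∪ S.image s))
  rw [e4, Fintype.card_fin] at e5
  rw [e2]
  push_cast
  congr 1
  have : ((2 * S.card + 1 + (insert v (S ∪ S.image s))ᶜ.card : ℕ) : ℝ) = ((2*n : ℕ) : ℝ) := by
    rw [e5]
  push_cast at this
  linarith

theorem ext_empty {n : ℕ} (s : Equiv.Perm (Fin (2*n))) (hs : ∀ x, s (s x) ≠ x)
    (S : Finset (Fin (2*n))) (h : ¬ Disjoint S (S.image s)) : (extSet s S).card = 0 := by
  rw [Finset.card_eq_zero, Finset.eq_empty_iff_forall_notMem]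
  intro C hC
  rw [mem_extSet] at hC
  apply h
  rw [Finset.disjoint_left]
  intro x hx hx'
  obtain ⟨u, hu, rfl⟩ := Finset.mem_image.1 hx'
  have h1 := hC _ hx
  rw [← hC u hu, C.2.1, hC u hu] at h1
  exact hs u h1.symm

theorem step {n : ℕ} (s : Equiv.Perm (Fin (2*n))) (hs : ∀ x, s (s x) ≠ x)
    (S : Finset (Fin (2*n))) :
    ((2*n : ℝ) - 3 * S.card) * (extSet s S).card ≤
      ((2*n : ℝ) - 2 * S.card - 1) * ∑ v ∈ Sᶜ, ((extSet s (insert v S)).card : ℝ) ∧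
    ((2*n : ℝ) - 2 * S.card - 1) * ∑ v ∈ Sᶜ, ((extSet s (insert v S)).card : ℝ) ≤
      ((2*n : ℝ) - 2 * S.card) * (extSet s S).card := by
  have hs1 : ∀ x, s x ≠ x := fun x h => hs x (by rw [h, h])
  by_cases hd : Disjoint S (S.image s)
  swap
  · have h0 := ext_empty s hs S hd
    have : ∀ v ∈ Sᶜ, ((extSet s (insert v S)).card : ℝ) = 0 := by
      intro v _
      have h1 : extSet s (insert v S) ⊆ extSet s S := by
        intro C
        simp only [mem_extSet, Finset.mem_insert, forall_eq_or_imp]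
        exact fun h => h.2
      have := Finset.card_le_card h1
      norm_cast
      omega
    rw [Finset.sum_congr rfl this, h0]
    simp
  set B := (S ∪ S.image s) ∪ S.image s.symm with hB
  have key : ∀ v ∈ Sᶜ, ((2*n : ℝ) - 2 * S.card - 1) * ((extSet s (insert v S)).card : ℝ) =
      if v ∈ Bᶜ then ((extSet s S).card : ℝ) else 0 := by
    intro v hv
    have hv : v ∉ S := by simpa using hv
    split_ifs with h
    · have h' : v ∉ S ∪ S.image s ∧ v ∉ S.image s.symm := by
        rw [hB, Finset.mem_compl, Finset.mem_union] at h
        tauto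
      refine ext_insert s S v hd h'.1 ?_ (hs1 v)
      intro h3
      rcases Finset.mem_union.1 h3 with h3 | h3
      · exact h'.2 (Finset.mem_image.2 ⟨_, h3, by simp⟩)
      · obtain ⟨u, hu, h4⟩ := Finset.mem_image.1 h3
        exact hv (s.injective h4 ▸ hu)
    · rw [ext_empty s hs]
      · simp
      · intro hdis
        rw [Finset.disjoint_left] at hdis
        rw [Finset.mem_compl, not_not, hB, Finset.mem_union, Finset.mem_union] at h
        rcases h with (h | h) | h
        · exact hv h
        · exact hdis (Finset.mem_insert_self _ _)
            (Finset.image_subset_image (Finset.subset_insert _ _) h)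
        · obtain ⟨u, hu, rfl⟩ := Finset.mem_image.1 h
          refine hdis (Finset.mem_insert_of_mem hu) ?_
          exact Finset.mem_image.2 ⟨_, Finset.mem_insert_self _ _, by simp⟩
  rw [Finset.mul_sum, Finset.sum_congr rfl key, ← Finset.sum_filter, Finset.sum_const,
    nsmul_eq_mul]
  have hf : Sᶜ.filter (fun v => v ∈ Bᶜ) = Bᶜ := by
    ext v
    simp [hB]
  rw [hf]
  have c1 : B.card ≤ 3 * S.card := by
    have a1 := Finset.card_union_le (S ∪ S.image s) (S.image s.symm)
    have a2 := Finset.card_union_le S (S.image s)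
    have a3 := Finset.card_image_le (s := S) (f := s)
    have a4 := Finset.card_image_le (s := S) (f := s.symm)
    rw [← hB] at a1
    omega
  have c2 : 2 * S.card ≤ B.card := by
    have a1 : (S ∪ S.image s).card ≤ B.card := Finset.card_le_card Finset.subset_union_left
    rw [Finset.card_union_of_disjoint hd, Finset.card_image_of_injective _ s.injective] at a1
    omega
  have c3 := Finset.card_add_card_compl B
  rw [Fintype.card_fin] at c3
  have c1' : (B.card : ℝ) ≤ 3 * S.card := by exact_mod_cast c1
  have c2' : 2 * (S.card : ℝ) ≤ B.card := by exact_mod_cast c2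
  have c3' : (B.card : ℝ) + Bᶜ.card = 2 * n := by exact_mod_cast c3
  constructor
  · apply mul_le_mul_of_nonneg_right _ (Nat.cast_nonneg _)
    linarith
  · apply mul_le_mul_of_nonneg_right _ (Nat.cast_nonneg _)
    linarith

/-- Binomial moment (unnormalised). -/
noncomputable def mom {n : ℕ} (s : Equiv.Perm (Fin (2*n))) (r : ℕ) : ℝ :=
  ∑ C : ChordDiagram n, ((agreeSet s C).card.choose r : ℝ)

theorem mom_eq {n : ℕ} (s : Equiv.Perm (Fin (2*n))) (r : ℕ) :
    mom s r = ∑ S ∈ Finset.powersetCard r Finset.univ, ((extSet s S).card : ℝ) := by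
  have : ∀ S : Finset (Fin (2*n)), ((extSet s S).card : ℝ) =
      ∑ C : ChordDiagram n, if S ⊆ agreeSet s C then (1:ℝ) else 0 := by
    intro S
    rw [extSet, Finset.sum_boole]
  simp_rw [this]
  rw [Finset.sum_comm, mom]
  refine Finset.sum_congr rfl fun C _ => ?_
  rw [Finset.sum_boole, ← Finset.card_powersetCard]
  congr 2
  ext S
  simp [Finset.mem_powersetCard, and_comm]

theorem mom_succ {n : ℕ} (s : Equiv.Perm (Fin (2*n))) (r : ℕ) :
    (r + 1) * mom s (r+1) = ∑ S ∈ Finset.powersetCard r Finset.univ,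
      ∑ v ∈ Sᶜ, ((extSet s (insert v S)).card : ℝ) := by
  have h1 : ∀ S : Finset (Fin (2*n)), ∑ v ∈ Sᶜ, ((extSet s (insert v S)).card : ℝ) =
      ∑ C : ChordDiagram n, if S ⊆ agreeSet s C then
        (((agreeSet s C).card - S.card : ℕ) : ℝ) else 0 := by
    intro S
    have : ∀ v, ((extSet s (insert v S)).card : ℝ) =
      ∑ C : ChordDiagram n, if insert v S ⊆ agreeSet s C then (1:ℝ) else 0 := by
      intro v
      rw [extSet, Finset.sum_boole]
    simp_rw [this]
    rw [Finset.sum_comm]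
    refine Finset.sum_congr rfl fun C _ => ?_
    rw [Finset.sum_boole]
    split_ifs with h
    · rw [← Finset.card_sdiff_of_subset h]
      congr 2
      ext v
      simp only [Finset.mem_filter, Finset.mem_compl, Finset.insert_subset_iff, Finset.mem_sdiff]
      tauto
    · norm_cast
      rw [Finset.card_eq_zero, Finset.filter_eq_empty_iff]
      intro v _ h'
      exact h (Finset.insert_subset_iff.1 h').2
  simp_rw [h1]
  rw [Finset.sum_comm, mom, Finset.mul_sum]
  refine Finset.sum_congr rfl fun C _ => ?_
  have h2 : ∀ S ∈ Finset.powersetCard r (Finset.univ : Finset (Fin (2*n))),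
      (if S ⊆ agreeSet s C then (((agreeSet s C).card - S.card : ℕ) : ℝ) else 0) =
      if S ⊆ agreeSet s C then (((agreeSet s C).card - r : ℕ) : ℝ) else 0 := by
    intro S hS
    rw [(Finset.mem_powersetCard.1 hS).2]
  rw [Finset.sum_congr rfl h2, ← Finset.sum_filter, Finset.sum_const, nsmul_eq_mul]
  have h3 : (Finset.powersetCard r (Finset.univ : Finset (Fin (2*n)))).filter
      (fun S => S ⊆ agreeSet s C) = Finset.powersetCard r (agreeSet s C) := by
    ext S
    simp [Finset.mem_powersetCard, and_comm]
  rw [h3, Finset.card_powersetCard]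
  have := Nat.choose_succ_right_eq (agreeSet s C).card r
  rw [mul_comm]
  exact_mod_cast this

theorem mom_step {n : ℕ} (s : Equiv.Perm (Fin (2*n))) (hs : ∀ x, s (s x) ≠ x) (r : ℕ) :
    ((2*n : ℝ) - 3 * r) * mom s r ≤ ((2*n : ℝ) - 2 * r - 1) * ((r + 1) * mom s (r+1)) ∧
    ((2*n : ℝ) - 2 * r - 1) * ((r + 1) * mom s (r+1)) ≤ ((2*n : ℝ) - 2 * r) * mom s r := by
  rw [mom_succ, mom_eq, Finset.mul_sum, Finset.mul_sum, Finset.mul_sum]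
  constructor
  · refine Finset.sum_le_sum fun S hS => ?_
    have := (step s hs S).1
    rwa [(Finset.mem_powersetCard.1 hS).2] at this
  · refine Finset.sum_le_sum fun S hS => ?_
    have := (step s hs S).2
    rwa [(Finset.mem_powersetCard.1 hS).2] at this

theorem mom_nonneg {n : ℕ} (s : Equiv.Perm (Fin (2*n))) (r : ℕ) : 0 ≤ mom s r :=
  Finset.sum_nonneg fun _ _ => Nat.cast_nonneg _

theorem mom_zero {n : ℕ} (s : Equiv.Perm (Fin (2*n))) :
    mom s 0 = Fintype.card (ChordDiagram n) := by
  simp [mom]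

theorem mom_big {n : ℕ} (s : Equiv.Perm (Fin (2*n))) (hs : ∀ x, s (s x) ≠ x) (r : ℕ)
    (h : n ≤ r) : mom s (r+1) = 0 := by
  rw [mom_eq]
  refine Finset.sum_eq_zero fun S hS => ?_
  have hc := (Finset.mem_powersetCard.1 hS).2
  rw [ext_empty s hs S, Nat.cast_zero]
  intro hd
  have h1 := Finset.card_union_of_disjoint hd
  rw [Finset.card_image_of_injective _ s.injective] at h1
  have h2 := Finset.card_le_univ (S ∪ S.image s)
  rw [Fintype.card_fin] at h2
  omega

theorem mom_bound {n : ℕ} (s : Equiv.Perm (Fin (2*n))) (hs : ∀ x, s (s x) ≠ x) (r : ℕ) :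
    mom s r ≤ 2^r / r.factorial * Fintype.card (ChordDiagram n) := by
  induction r with
  | zero => simp [mom_zero]
  | succ r ih =>
    have hk : (r + 1 : ℝ) * mom s (r+1) ≤ 2 * mom s r := by
      have h0 := mom_nonneg s r
      have h1 := mom_nonneg s (r+1)
      have h2 := (mom_step s hs r).2
      have h3 : 0 ≤ (r + 1 : ℝ) * mom s (r+1) := by positivity
      rcases lt_or_ge r n with h | h
      · have h' : (r : ℝ) + 1 ≤ n := by exact_mod_cast h
        have h5 : (0:ℝ) < 2*n - 2*r - 1 := by linarith
        nlinarith
      · rw [mom_big s hs r h]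
        linarith
    have hr : (0:ℝ) < r + 1 := by positivity
    have : mom s (r+1) ≤ 2 * mom s r / (r+1) := by
      rw [le_div_iff₀ hr]; linarith
    refine this.trans ?_
    rw [div_le_iff₀ hr, Nat.factorial_succ]
    push_cast
    calc 2 * mom s r ≤ 2 * (2^r / r.factorial * Fintype.card (ChordDiagram n)) := by linarith
      _ = _ := by rw [pow_succ]; field_simp

theorem card_pos (n : ℕ) : 0 < Fintype.card (ChordDiagram n) := by
  apply Fintype.card_pos_iff.2
  refine ⟨⟨Fin.rev, fun i => Fin.rev_rev i, fun i h => ?_⟩⟩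
  have := congrArg Fin.val h
  rw [Fin.val_rev] at this
  have := i.2
  omega

theorem mom_tendsto (s : ∀ n : ℕ, Equiv.Perm (Fin (2*n)))
    (hs : ∀ᶠ n in atTop, ∀ x, s n (s n x) ≠ x) (r : ℕ) :
    Tendsto (fun n => mom (s n) r / Fintype.card (ChordDiagram n)) atTop
      (nhds (1 / r.factorial)) := by
  induction r with
  | zero =>
    simp only [mom_zero, Nat.factorial_zero, Nat.cast_one, div_one]
    refine tendsto_const_nhds.congr fun n => ?_
    rw [div_self]
    exact_mod_cast (card_pos n).ne'
  | succ r ih =>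
    have hlim : ∀ a : ℝ, Tendsto (fun n : ℕ => ((2*n : ℝ) - a) / ((2*n : ℝ) - 2 * r - 1)) atTop
        (nhds 1) := by
      intro a
      have h1 : Tendsto (fun n : ℕ => ((2*n : ℝ) - 2 * r - 1)) atTop atTop := by
        have : Tendsto (fun n : ℕ => (2 * n : ℝ)) atTop atTop :=
          tendsto_natCast_atTop_atTop.const_mul_atTop (by norm_num)
        simpa [sub_eq_add_neg, add_assoc] using tendsto_atTop_add_const_right _ (-(2 * r) + -1 : ℝ) this
      have h2 : Tendsto (fun n : ℕ => 1 + (2 * r + 1 - a) / ((2*n : ℝ) - 2 * r - 1)) atTop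
          (nhds (1 + 0)) := tendsto_const_nhds.add (h1.const_div_atTop _)
      rw [add_zero] at h2
      refine h2.congr' ?_
      filter_upwards [h1.eventually_gt_atTop 0] with n hn
      have hn' := hn.ne'
      rw [eq_div_iff hn', add_mul, div_mul_cancel₀ _ hn']
      ring
    have hr : (0:ℝ) < r + 1 := by positivity
    have e : (1 : ℝ) / (r+1).factorial = 1 * (1 / r.factorial) / (r + 1) := by
      rw [Nat.factorial_succ]; push_cast; field_simp
    rw [e]
    have hlo := ((hlim (3*r)).mul ih).div_const ((r:ℝ) + 1)
    have hhi := ((hlim (2*r)).mul ih).div_const ((r:ℝ) + 1)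
    refine tendsto_of_tendsto_of_tendsto_of_le_of_le' hlo hhi ?_ ?_
    · filter_upwards [hs, eventually_gt_atTop r] with n hn hnr
      have h' : (r : ℝ) + 1 ≤ n := by exact_mod_cast hnr
      have h5 : (0:ℝ) < 2*n - 2*r - 1 := by linarith
      have hc : (0:ℝ) < Fintype.card (ChordDiagram n) := by exact_mod_cast card_pos n
      have := (mom_step (s n) hn r).1
      rw [div_mul_div_comm, div_div, div_le_div_iff₀ (by positivity) hc]
      nlinarith
    · filter_upwards [hs, eventually_gt_atTop r] with n hn hnr
      have h' : (r : ℝ) + 1 ≤ n := by exact_mod_cast hnr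
      have h5 : (0:ℝ) < 2*n - 2*r - 1 := by linarith
      have hc : (0:ℝ) < Fintype.card (ChordDiagram n) := by exact_mod_cast card_pos n
      have := (mom_step (s n) hn r).2
      rw [div_mul_div_comm, div_div, div_le_div_iff₀ hc (by positivity)]
      nlinarith

theorem incl_excl (m L K : ℕ) (h : L ≤ K) :
    ∑ k ∈ Finset.range (K+1), (-1:ℝ)^k * ((m+k).choose m) * (L.choose (m+k)) =
      if L = m then 1 else 0 := by
  have h1 : ∀ k, (-1:ℝ)^k * ((m+k).choose m) * (L.choose (m+k)) =
      L.choose m * ((-1)^k * ((L-m).choose k)) := by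
    intro k
    by_cases hk : m + k ≤ L
    · have := Nat.choose_mul (n := L) (k := m+k) (s := m) (by omega)
      rw [Nat.add_sub_cancel_left] at this
      have h2 : ((L.choose (m+k) : ℝ)) * ((m+k).choose m) = L.choose m * (L-m).choose k := by
        exact_mod_cast this
      linear_combination (-1:ℝ)^k * h2
    · rw [Nat.choose_eq_zero_of_lt (by omega : L < m + k)]
      by_cases hm : m ≤ L
      · rw [Nat.choose_eq_zero_of_lt (by omega : L - m < k)]; simp
      · rw [Nat.choose_eq_zero_of_lt (by omega : L < m)]; simp
  simp_rw [h1]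
  rw [← Finset.mul_sum]
  have h3 : ∑ k ∈ Finset.range (K+1), ((-1:ℝ)^k * ((L-m).choose k)) =
      ∑ k ∈ Finset.range (L-m+1), ((-1:ℝ)^k * ((L-m).choose k)) := by
    symm
    apply Finset.sum_subset
    · intro k; simp only [Finset.mem_range]; omega
    · intro k _ hk
      simp only [Finset.mem_range, not_lt] at hk
      rw [Nat.choose_eq_zero_of_lt (by omega)]; simp
  have h4 : ∑ k ∈ Finset.range (L-m+1), ((-1:ℝ)^k * ((L-m).choose k)) =
      if L - m = 0 then 1 else 0 := by
    exact_mod_cast Int.alternating_sum_range_choose (n := L - m)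
  rw [h3, h4]
  by_cases hL : L = m
  · simp [hL]
  · rw [if_neg hL]
    by_cases hm : L < m
    · rw [Nat.choose_eq_zero_of_lt hm]; simp
    · rw [if_neg (by omega)]; simp

theorem agree_card_le {n : ℕ} (s : Equiv.Perm (Fin (2*n))) (C : ChordDiagram n) :
    (agreeSet s C).card ≤ 2*n := by
  simpa using Finset.card_le_univ (agreeSet s C)

theorem prob_eq {n : ℕ} (s : Equiv.Perm (Fin (2*n))) (m : ℕ) :
    prob n (fun C => (agreeSet s C).card = m) =
      ∑' k : ℕ, (-1:ℝ)^k * ((m+k).choose m) * (mom s (m+k) / Fintype.card (ChordDiagram n)) := by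
  rw [tsum_eq_sum (s := Finset.range (2*n+1))]
  · rw [prob, ← Finset.sum_boole]
    simp_rw [← mul_div_assoc]
    rw [← Finset.sum_div, Finset.card_univ]
    congr 1
    simp_rw [mom, Finset.mul_sum]
    rw [Finset.sum_comm]
    refine Finset.sum_congr rfl fun C _ => ?_
    rw [incl_excl m _ _ (agree_card_le s C)]
    congr
  · intro k hk
    simp only [Finset.mem_range, not_lt] at hk
    have : mom s (m+k) = 0 := by
      apply Finset.sum_eq_zero
      intro C _
      have := agree_card_le s C
      rw [Nat.choose_eq_zero_of_lt (by omega)]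
      simp
    simp [this]

theorem poisson_lim (s : ∀ n : ℕ, Equiv.Perm (Fin (2*n)))
    (hs : ∀ᶠ n in atTop, ∀ x, s n (s n x) ≠ x) (m : ℕ) :
    Tendsto (fun n => prob n (fun C => (agreeSet (s n) C).card = m)) atTop
      (nhds (Real.exp (-1) / m.factorial)) := by
  have hch : ∀ k, (((m+k).choose m : ℕ) : ℝ) = (m+k).factorial / (m.factorial * k.factorial) := by
    intro k
    rw [Nat.cast_choose ℝ (by omega : m ≤ m + k), Nat.add_sub_cancel_left]
  have e : Real.exp (-1) / m.factorial =
      ∑' k : ℕ, (-1:ℝ)^k * ((m+k).choose m) * (1 / (m+k).factorial) := by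
    rw [Real.exp_eq_exp_ℝ, NormedSpace.exp_eq_tsum_div, ← tsum_div_const]
    refine tsum_congr fun k => ?_
    rw [hch]
    field_simp
  rw [e]
  simp_rw [prob_eq]
  refine tendsto_tsum_of_dominated_convergence
    (bound := fun k : ℕ => 2^m / m.factorial * ((2:ℝ)^k / k.factorial)) ?_ ?_ ?_
  · exact (Real.summable_pow_div_factorial 2).mul_left _
  · intro k
    exact (mom_tendsto s hs (m+k)).const_mul _
  · filter_upwards [hs] with n hn k
    have hc : (0:ℝ) < Fintype.card (ChordDiagram n) := by exact_mod_cast card_pos n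
    have h1 := mom_bound (s n) hn (m+k)
    have h2 := mom_nonneg (s n) (m+k)
    rw [Real.norm_eq_abs, abs_mul, abs_mul, abs_pow, abs_neg, abs_one, one_pow, one_mul,
      abs_of_nonneg (by positivity), abs_of_nonneg (by positivity)]
    have h3 : mom (s n) (m+k) / Fintype.card (ChordDiagram n) ≤ 2^(m+k) / (m+k).factorial := by
      rwa [div_le_iff₀ hc]
    calc _ ≤ (((m+k).choose m : ℕ) : ℝ) * (2^(m+k) / (m+k).factorial) := by gcongr
      _ = _ := by rw [hch, pow_add]; field_simp

/-- Cyclic shift by `j+1`. -/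
noncomputable def shiftP (j n : ℕ) : Equiv.Perm (Fin (2*n)) := finRotate (2*n) ^ (j+1)

theorem shiftP_val (j n : ℕ) (x : Fin (2*n)) :
    ((shiftP j n x : Fin (2*n)) : ℕ) = (x + (j+1)) % (2*n) := by
  have hr : ∀ y : Fin (2*n), ((finRotate (2*n) y : Fin (2*n)) : ℕ) = (y + 1) % (2*n) := by
    intro y
    have hy := y.2
    obtain ⟨k, hk⟩ : ∃ k, 2*n = k+1 := ⟨2*n-1, by omega⟩
    generalize 2*n = N at *
    subst hk
    rw [finRotate_apply, Fin.val_add, Fin.val_one', Nat.add_mod_mod]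
  unfold shiftP
  induction j with
  | zero => rw [zero_add, pow_one, hr]
  | succ j ih =>
    rw [pow_succ', Equiv.Perm.mul_apply, hr, ih, Nat.mod_add_mod]
    rfl

theorem shiftP_cases {j n : ℕ} (hn : j + 2 ≤ n) (x : Fin (2*n)) :
    ((shiftP j n x : ℕ) = x + (j+1) ∧ (x:ℕ) + (j+1) < 2*n) ∨
    ((shiftP j n x : ℕ) + 2*n = x + (j+1)) := by
  rw [shiftP_val]
  have := x.2
  rcases lt_or_ge ((x:ℕ) + (j+1)) (2*n) with h | h
  · left; exact ⟨Nat.mod_eq_of_lt h, h⟩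
  · right
    rw [Nat.mod_eq_sub_mod h, Nat.mod_eq_of_lt (by omega)]
    omega

theorem shiftP_ne {j n : ℕ} (hn : j + 2 ≤ n) (x : Fin (2*n)) :
    shiftP j n (shiftP j n x) ≠ x := by
  intro h
  have h1 := shiftP_cases hn x
  have h2 := shiftP_cases hn (shiftP j n x)
  rw [h] at h2
  omega

theorem lengthCount_eq {j n : ℕ} (hn : j + 2 ≤ n) (C : ChordDiagram n) :
    lengthCount n j C = (agreeSet (shiftP j n) C).card := by
  symm
  unfold lengthCount
  apply Finset.card_bij (fun y _ => min y (C.1 y))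
  · intro y hy
    have hy : C.1 y = shiftP j n y := by simpa [agreeSet] using hy
    have h1 := shiftP_cases hn y
    rw [← hy] at h1
    have h2 := y.2
    have h3 := (C.1 y).2
    rw [Finset.mem_filter]
    simp only [Finset.mem_univ, true_and]
    unfold chordLength
    rcases lt_or_ge y (C.1 y) with h | h
    · rw [min_eq_left h.le]
      refine ⟨h, ?_⟩
      rw [Fin.lt_def] at h
      omega
    · rw [min_eq_right h, C.2.1]
      have h' : C.1 y < y := lt_of_le_of_ne h (C.2.2 y)
      refine ⟨h', ?_⟩
      rw [Fin.lt_def] at h'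
      omega
  · intro y hy z hz hyz
    have hy : C.1 y = shiftP j n y := by simpa [agreeSet] using hy
    have hz : C.1 z = shiftP j n z := by simpa [agreeSet] using hz
    have key : y = C.1 z → y = z := by
      intro h
      exfalso
      apply shiftP_ne hn z
      rw [← hz, ← h, ← hy, h, C.2.1]
    rcases min_choice y (C.1 y) with a | a <;> rcases min_choice z (C.1 z) with b | b <;>
      rw [a, b] at hyz
    · exact hyz
    · exact key hyz
    · apply key; rw [← hyz, C.2.1]
    · have := congrArg C.1 hyz
      rwa [C.2.1, C.2.1] at this
  · intro x hx
    rw [Finset.mem_filter] at hx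
    simp only [Finset.mem_univ, true_and] at hx
    unfold chordLength at hx
    obtain ⟨h, hl⟩ := hx
    have hlt := h
    rw [Fin.lt_def] at h
    have h2 := x.2
    have h3 := (C.1 x).2
    have h4 : (C.1 x : ℕ) = x + (j+1) ∨ (x : ℕ) + 2*n = C.1 x + (j+1) := by omega
    rcases h4 with h4 | h4
    · refine ⟨x, ?_, min_eq_left hlt.le⟩
      simp only [agreeSet, Finset.mem_filter, Finset.mem_univ, true_and]
      apply Fin.ext
      have := shiftP_cases hn x
      omega
    · refine ⟨C.1 x, ?_, ?_⟩
      · simp only [agreeSet, Finset.mem_filter, Finset.mem_univ, true_and, C.2.1]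
        apply Fin.ext
        have := shiftP_cases hn (C.1 x)
        omega
      · rw [C.2.1]; exact min_eq_right hlt.le

theorem stmt3 (j : ℕ) (m : ℕ) :
    Filter.Tendsto
      (fun n : ℕ => prob n (fun C => lengthCount n j C = m))
      Filter.atTop (nhds (Real.exp (-1) / (m.factorial : ℝ))) := by
  refine (poisson_lim (shiftP j) ?_ m).congr' ?_
  · filter_upwards [eventually_ge_atTop (j+2)] with n hn x
    exact shiftP_ne hn x
  · filter_upwards [eventually_ge_atTop (j+2)] with n hn
    simp_rw [lengthCount_eq hn]
end

section
/- Let k = k(n) be a function of n with k(n)² = o(n) as n→∞, and let Len_k denote the set of chords of C_n of length at least k. Then with high probability, every chord in Len_k crosses at least k other chords of Len_k (i.e., the minimum degree of the subdiagram Len_k is at least k). Consequently, with high probability the k-core of C_n equals Len_k. -/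
open scoped Classical
open Finset Filter

/-! ### Counting matchings on subsets of a type -/

/-- Involutions whose non-fixed points are exactly `V`. -/
noncomputable def Inv4 {α : Type} [Fintype α] (V : Finset α) : Finset (α → α) :=
  Finset.univ.filter fun f => (∀ i, f (f i) = i) ∧ ∀ i, f i = i ↔ i ∉ V

/-- number of perfect matchings on `2n` points -/
def M4 : ℕ → ℕ
  | 0 => 1
  | n+1 => (2*n+1) * M4 n

lemma M4_pos (n : ℕ) : 0 < M4 n := by
  induction n with
  | zero => simp [M4]
  | succ n ih => simp only [M4]; positivity

/-- remove the chord `b c` -/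
noncomputable def rest4 {α : Type} (b c : α) (f : α → α) : α → α :=
  fun i => if i = b ∨ i = c then i else f i

lemma rest4_mem {α : Type} [Fintype α] {V : Finset α} {f : α → α} {b c : α}
    (hf : f ∈ Inv4 V) (hbc : f b = c) : rest4 b c f ∈ Inv4 (V \ {b, c}) := by
  simp only [Inv4, mem_filter, mem_univ, true_and] at hf ⊢
  obtain ⟨h1, h2⟩ := hf
  have hcb : f c = b := by rw [← hbc, h1]
  constructor
  · intro i
    by_cases hi : i = b ∨ i = c
    · simp [rest4, hi]
    · have : ¬ (f i = b ∨ f i = c) := by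
        rintro (h | h)
        · apply hi; right; rw [← h1 i, h, hbc]
        · apply hi; left; rw [← h1 i, h, hcb]
      simp [rest4, hi, this, h1]
  · intro i
    by_cases hi : i = b ∨ i = c
    · simp only [rest4, hi, if_true, true_iff]
      simp only [Finset.mem_sdiff, mem_insert, mem_singleton]
      tauto
    · simp only [rest4, hi, if_false]
      rw [h2 i]
      simp only [Finset.mem_sdiff, mem_insert, mem_singleton]
      tauto

lemma rest4_inj {α : Type} [Fintype α] {V : Finset α} {f g : α → α} {b c : α}
    (hf : f ∈ Inv4 V) (hbc : f b = c) (hg : g ∈ Inv4 V) (hbc' : g b = c)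
    (h : rest4 b c f = rest4 b c g) : f = g := by
  simp only [Inv4, mem_filter, mem_univ, true_and] at hf hg
  have hcb : f c = b := by rw [← hbc, hf.1]
  have hcb' : g c = b := by rw [← hbc', hg.1]
  funext i
  by_cases hb : i = b
  · subst hb; rw [hbc, hbc']
  by_cases hc : i = c
  · rw [hc, hcb, hcb']
  have := congrFun h i
  simpa [rest4, hb, hc] using this

lemma fiber4 {α : Type} [Fintype α] {V : Finset α} {b c : α} (hb : b ∈ V) (hc : c ∈ V)
    (hne : b ≠ c) : ((Inv4 V).filter fun f => f b = c).card = (Inv4 (V \ {b, c})).card := by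
  apply Finset.card_bij (fun f _ => rest4 b c f)
  · intro f hf
    rw [mem_filter] at hf
    exact rest4_mem hf.1 hf.2
  · intro f hf g hg h
    rw [mem_filter] at hf hg
    exact rest4_inj hf.1 hf.2 hg.1 hg.2 h
  · intro g hg
    simp only [Inv4, mem_filter, mem_univ, true_and, Finset.mem_sdiff, mem_insert, mem_singleton] at hg
    obtain ⟨h1, h2⟩ := hg
    have gb : g b = b := (h2 b).2 (by simp)
    have gc : g c = c := (h2 c).2 (by simp)
    have key : ∀ i, i ≠ b → i ≠ c → g i ≠ b ∧ g i ≠ c := by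
      intro i hi hi'
      constructor
      · intro h; apply hi; rw [← h1 i, h, gb]
      · intro h; apply hi'; rw [← h1 i, h, gc]
    refine ⟨fun i => if i = b then c else if i = c then b else g i, ?_, ?_⟩
    · simp only [Inv4, mem_filter, mem_univ, true_and]
      refine ⟨⟨?_, ?_⟩, by simp⟩
      · intro i
        by_cases hi : i = b
        · simp [hi, hne.symm]
        by_cases hi' : i = c
        · simp [hi', hne.symm]
        simp [hi, hi', key i hi hi', h1]
      · intro i
        by_cases hi : i = b
        · simp [hi, hne.symm, hb]
        by_cases hi' : i = c
        · simp [hi', hne.symm, hc, hne]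
        simp only [hi, hi', if_false]
        rw [h2]
        tauto
    · funext i
      by_cases hi : i = b
      · simp [rest4, hi, gb]
      by_cases hi' : i = c
      · simp [rest4, hi', gc]
      simp [rest4, hi, hi']

lemma card_sdiff_pair4 {α : Type} {V : Finset α} {b c : α} (hb : b ∈ V) (hc : c ∈ V)
    (hne : b ≠ c) : (V \ {b, c}).card = V.card - 2 := by
  rw [Finset.card_sdiff_of_subset, Finset.card_pair hne]
  intro i hi
  simp only [mem_insert, mem_singleton] at hi
  rcases hi with rfl | rfl <;> assumption

lemma Inv4_map {α : Type} [Fintype α] {V : Finset α} {f : α → α} (hf : f ∈ Inv4 V) {a : α}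
    (ha : a ∈ V) : f a ∈ V ∧ f a ≠ a := by
  simp only [Inv4, mem_filter, mem_univ, true_and] at hf
  have h1 : f a ≠ a := fun h => ((hf.2 a).1 h) ha
  refine ⟨?_, h1⟩
  by_contra h
  have := (hf.2 (f a)).2 h
  rw [hf.1] at this
  exact h1 this.symm

lemma card_Inv4 {α : Type} [Fintype α] : ∀ (n : ℕ) (V : Finset α), V.card = 2 * n →
    (Inv4 V).card = M4 n := by
  intro n
  induction n with
  | zero =>
    intro V hV
    have : V = ∅ := by simpa using hV
    subst this
    simp only [M4]
    rw [Finset.card_eq_one]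
    refine ⟨fun i => i, ?_⟩
    ext f
    simp only [Inv4, mem_filter, mem_univ, true_and, mem_singleton, notMem_empty, not_false_eq_true,
      iff_true]
    constructor
    · rintro ⟨_, h⟩; funext i; exact h i
    · rintro rfl; simp
  | succ n ih =>
    intro V hV
    have hne : V.Nonempty := by rw [← Finset.card_pos]; omega
    obtain ⟨a, ha⟩ := hne
    rw [Finset.card_eq_sum_card_fiberwise (f := fun f => f a) (t := V.erase a)]
    · rw [Finset.sum_congr rfl (g := fun _ => M4 n)]
      · rw [Finset.sum_const, Finset.card_erase_of_mem ha, hV]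
        simp only [M4, smul_eq_mul]
        rfl
      · intro c hc
        rw [mem_erase] at hc
        rw [fiber4 ha hc.2 hc.1.symm]
        apply ih
        rw [card_sdiff_pair4 ha hc.2 hc.1.symm]
        omega
    · intro f hf
      have := Inv4_map (Finset.mem_coe.1 hf) ha
      simp only [mem_coe, mem_erase]
      tauto

/-- Number of matchings of `V` with the property `P`. -/
noncomputable def cnt4 {α : Type} [Fintype α] (V : Finset α) (P : (α → α) → Prop) : ℕ :=
  ((Inv4 V).filter P).card

lemma cnt4_le {α : Type} [Fintype α] (n : ℕ) (V : Finset α) (hV : V.card = 2 * n)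
    (P : (α → α) → Prop) : cnt4 V P ≤ M4 n := by
  rw [← card_Inv4 n V hV]
  exact Finset.card_filter_le _ _

lemma cnt4_zero {α : Type} [Fintype α] (V : Finset α) (P : (α → α) → Prop)
    (h : ∀ f ∈ Inv4 V, ¬ P f) : cnt4 V P = 0 := by
  rw [cnt4, Finset.card_eq_zero, Finset.filter_eq_empty_iff]
  exact fun f hf => h f hf

/-- Exposing the partner of `b`. -/
lemma step4 {α : Type} [Fintype α] {V : Finset α} {b : α} (T : Finset α)
    (P : (α → α) → Prop) (hP : ∀ f ∈ Inv4 V, P f → f b ∈ T) (hb : b ∈ V)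
    (K t : ℕ) (ht : T.card ≤ t)
    (h : ∀ c ∈ V, c ≠ b → cnt4 V (fun f => P f ∧ f b = c) ≤ K) :
    cnt4 V P ≤ t * K := by
  calc cnt4 V P
      ≤ ∑ c ∈ T, cnt4 V (fun f => P f ∧ f b = c) := by
        simp only [cnt4]
        rw [Finset.card_eq_sum_card_fiberwise (f := fun f => f b) (t := T)]
        · simp only [Finset.filter_filter]
          apply le_of_eq
          apply Finset.sum_congr rfl
          intro c _
          congr 1
          ext f
          simp only [mem_filter]
        · intro f hf
          simp only [mem_coe, mem_filter] at hf
          exact hP f hf.1 hf.2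
    _ ≤ ∑ c ∈ T, K := by
        apply Finset.sum_le_sum
        intro c _
        by_cases hc : c ∈ V ∧ c ≠ b
        · exact h c hc.1 hc.2
        · rw [cnt4_zero]
          · exact Nat.zero_le _
          · rintro f hf ⟨_, rfl⟩
            exact hc (Inv4_map hf hb)
    _ ≤ t * K := by
        rw [Finset.sum_const, smul_eq_mul]
        exact Nat.mul_le_mul_right _ ht

/-- Transfer of a fiber to a smaller matching. -/
lemma fiber_le4 {α : Type} [Fintype α] {V : Finset α} {b c : α}
    (P Q : (α → α) → Prop) (h : ∀ f ∈ Inv4 V, f b = c → P f → Q (rest4 b c f)) :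
    cnt4 V (fun f => P f ∧ f b = c) ≤ cnt4 (V \ {b, c}) Q := by
  unfold cnt4
  apply Finset.card_le_card_of_injOn (rest4 b c)
  · intro f hf
    simp only [mem_coe, mem_filter] at hf ⊢
    exact ⟨rest4_mem hf.1 hf.2.2, h f hf.1 hf.2.2 hf.2.1⟩
  · intro f hf g hg hfg
    simp only [mem_coe, mem_filter] at hf hg
    exact rest4_inj hf.1 hf.2.2 hg.1 hg.2.2 hfg

/-- Count of matchings where all of `B` has constrained partners. -/
lemma count_block4 {α : Type} [Fintype α] (T : α → Finset α) (t : ℕ) (hT : ∀ b, (T b).card ≤ t) :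
    ∀ (r m : ℕ) (V B : Finset α), B ⊆ V → 2 * r ≤ B.card + 1 → V.card = 2 * (m + r) →
    cnt4 V (fun f => ∀ b ∈ B, f b ∈ T b) ≤ t ^ r * M4 m := by
  intro r
  induction r with
  | zero =>
    intro m V B _ _ hV
    rw [pow_zero, one_mul]
    exact cnt4_le m V (by simpa using hV) _
  | succ r ih =>
    intro m V B hBV hB hV
    have hne : B.Nonempty := by rw [← Finset.card_pos]; omega
    obtain ⟨b, hb⟩ := hne
    rw [pow_succ', mul_assoc]
    refine step4 (b := b) (T b) (fun f => ∀ b ∈ B, f b ∈ T b) (fun f _ hf => hf b hb) (hBV hb) _ t (hT b) ?_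
    intro c hc hcb
    refine (fiber_le4 (fun f => ∀ b ∈ B, f b ∈ T b) (fun f => ∀ b' ∈ B \ {b, c}, f b' ∈ T b') ?_).trans
      (ih m (V \ {b, c}) (B \ {b, c}) (Finset.sdiff_subset_sdiff hBV le_rfl) ?_ ?_)
    · intro f _ _ hf b' hb'
      simp only [Finset.mem_sdiff, mem_insert, mem_singleton] at hb'
      simp only [rest4, hb'.2, if_false]
      exact hf b' hb'.1
    · have := Finset.le_card_sdiff ({b, c} : Finset α) B
      have := Finset.card_le_two (a := b) (b := c)
      omega
    · rw [card_sdiff_pair4 (hBV hb) hc hcb.symm]; omega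

/-- Count of matchings where `R` is independent with constrained partners. -/
lemma count_indep4 {α : Type} [Fintype α] (T : α → Finset α) (t : ℕ) (hT : ∀ b, (T b).card ≤ t) :
    ∀ (r m : ℕ) (V B : Finset α), B ⊆ V → r = B.card → V.card = 2 * (m + r) →
    cnt4 V (fun f => ∀ b ∈ B, f b ∈ T b ∧ f b ∉ B) ≤ t ^ r * M4 m := by
  intro r
  induction r with
  | zero =>
    intro m V B _ _ hV
    rw [pow_zero, one_mul]
    exact cnt4_le m V (by simpa using hV) _
  | succ r ih =>
    intro m V B hBV hB hV
    have hne : B.Nonempty := by rw [← Finset.card_pos]; omega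
    obtain ⟨b, hb⟩ := hne
    rw [pow_succ', mul_assoc]
    refine step4 (b := b) (T b) (fun f => ∀ b ∈ B, f b ∈ T b ∧ f b ∉ B) (fun f _ hf => (hf b hb).1) (hBV hb) _ t (hT b) ?_
    intro c hc hcb
    have hmem := hc
    by_cases hcB : c ∈ B
    · rw [cnt4_zero]
      · exact Nat.zero_le _
      · rintro f hf ⟨h1, rfl⟩
        exact (h1 b hb).2 hcB
    refine (fiber_le4 (fun f => ∀ b ∈ B, f b ∈ T b ∧ f b ∉ B) (fun f => ∀ b' ∈ B.erase b, f b' ∈ T b' ∧ f b' ∉ B.erase b) ?_).trans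
      (ih m (V \ {b, c}) (B.erase b) ?_ ?_ ?_)
    · intro f _ _ hf b' hb'
      rw [mem_erase] at hb'
      have : ¬ (b' = b ∨ b' = c) := by
        rintro (h | h)
        · exact hb'.1 h
        · exact hcB (h ▸ hb'.2)
      simp only [rest4, this, if_false, mem_erase]
      have := hf b' hb'.2
      tauto
    · intro i hi
      rw [mem_erase] at hi
      simp only [Finset.mem_sdiff, mem_insert, mem_singleton]
      refine ⟨hBV hi.2, ?_⟩
      rintro (h | h)
      · exact hi.1 h
      · exact hcB (h ▸ hi.2)
    · rw [Finset.card_erase_of_mem hb]; omega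
    · rw [card_sdiff_pair4 (hBV hb) hc hcb.symm]; omega

/-- As above, with one given chord. -/
lemma count_chord4 {α : Type} [Fintype α] (T : α → Finset α) (t : ℕ) (hT : ∀ b, (T b).card ≤ t)
    (r m : ℕ) (V B : Finset α) (x y : α) (hx : x ∈ V) (hy : y ∈ V) (hxy : y ≠ x)
    (hBV : B ⊆ V \ {x, y}) (hr : r = B.card) (hV : V.card = 2 * (m + r + 1)) :
    cnt4 V (fun f => (∀ b ∈ B, f b ∈ T b ∧ f b ∉ B) ∧ f x = y) ≤ t ^ r * M4 m := by
  refine (fiber_le4 (fun f => ∀ b ∈ B, f b ∈ T b ∧ f b ∉ B) (fun f => ∀ b' ∈ B, f b' ∈ T b' ∧ f b' ∉ B) ?_).trans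
      (count_indep4 T t hT r m (V \ {x, y}) B hBV hr ?_)
  · intro f _ _ hf b' hb'
    have := hBV hb'
    simp only [Finset.mem_sdiff, mem_insert, mem_singleton] at this
    simp only [rest4, this.2, if_false]
    exact hf b' hb'
  · rw [card_sdiff_pair4 hx hy hxy.symm]; omega

/-! ### Cyclic arcs -/

lemma cnt4_union {α ι : Type} [Fintype α] (V : Finset α) (P : (α → α) → Prop) (I : Finset ι)
    (Q : ι → (α → α) → Prop) (h : ∀ f ∈ Inv4 V, P f → ∃ i ∈ I, Q i f) :
    cnt4 V P ≤ ∑ i ∈ I, cnt4 V (Q i) := by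
  have : (Inv4 V).filter P ⊆ I.biUnion fun i => (Inv4 V).filter (Q i) := by
    intro f hf
    rw [mem_filter] at hf
    obtain ⟨i, hi, hq⟩ := h f hf.1 hf.2
    rw [mem_biUnion]
    exact ⟨i, hi, mem_filter.2 ⟨hf.1, hq⟩⟩
  exact (Finset.card_le_card this).trans Finset.card_biUnion_le

/-- clockwise distance -/
def d4 {n : ℕ} (x z : Fin (2*n)) : ℕ :=
  if (x : ℕ) ≤ z then (z : ℕ) - x else z + 2 * n - x

lemma d4_lt {n : ℕ} (x z : Fin (2*n)) : d4 x z < 2 * n := by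
  have := x.2; have := z.2
  unfold d4; split_ifs <;> omega

lemma d4_inj {n : ℕ} (x z w : Fin (2*n)) (h : d4 x z = d4 x w) : z = w := by
  have := x.2; have := z.2; have := w.2
  apply Fin.ext
  unfold d4 at h; split_ifs at h <;> omega

lemma d4_surj {n : ℕ} (x : Fin (2*n)) (i : ℕ) (hi : i < 2 * n) : ∃ z, d4 x z = i := by
  have := x.2
  by_cases h : x + i < 2 * n
  · refine ⟨⟨x + i, h⟩, ?_⟩
    simp [d4]
  · refine ⟨⟨x + i - 2 * n, by omega⟩, ?_⟩
    simp only [d4]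
    split_ifs <;> omega

/-- points at given clockwise distances -/
noncomputable def at4 {n : ℕ} (x : Fin (2*n)) (S : Finset ℕ) : Finset (Fin (2*n)) :=
  Finset.univ.filter fun z => d4 x z ∈ S

lemma mem_at4 {n : ℕ} (x z : Fin (2*n)) (S : Finset ℕ) : z ∈ at4 x S ↔ d4 x z ∈ S := by
  simp [at4]

lemma card_at4_le {n : ℕ} (x : Fin (2*n)) (S : Finset ℕ) : (at4 x S).card ≤ S.card := by
  apply Finset.card_le_card_of_injOn (d4 x)
  · intro z hz
    exact (mem_at4 _ _ _).1 hz
  · intro z _ w _ h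
    exact d4_inj x z w h

lemma card_at4 {n : ℕ} (x : Fin (2*n)) (S : Finset ℕ) (hS : ∀ i ∈ S, i < 2 * n) :
    (at4 x S).card = S.card := by
  apply le_antisymm (card_at4_le x S)
  apply Finset.card_le_card_of_surjOn (d4 x)
  intro i hi
  obtain ⟨z, hz⟩ := d4_surj x i (hS i hi)
  exact ⟨z, by rw [mem_coe, mem_at4, hz]; exact hi, hz⟩

/-- clockwise arc of size `L` after `x` -/
noncomputable def arc4 {n : ℕ} (x : Fin (2*n)) (L : ℕ) : Finset (Fin (2*n)) := at4 x (Icc 1 L)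

lemma mem_arc4 {n : ℕ} (x z : Fin (2*n)) (L : ℕ) : z ∈ arc4 x L ↔ 1 ≤ d4 x z ∧ d4 x z ≤ L := by
  rw [arc4, mem_at4, mem_Icc]

lemma card_arc4 {n : ℕ} (x : Fin (2*n)) (L : ℕ) (hL : L < 2 * n) : (arc4 x L).card = L := by
  rw [arc4, card_at4]
  · simp
  · intro i hi
    rw [mem_Icc] at hi; omega

/-- partners making a chord at `z` useless -/
noncomputable def bad4 {n : ℕ} (k : ℕ) (x : Fin (2*n)) (L : ℕ) (z : Fin (2*n)) :
    Finset (Fin (2*n)) :=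
  arc4 x L ∪ at4 z (Icc 1 k ∪ Ico (2 * n - k) (2 * n))

lemma card_bad4 {n : ℕ} (k : ℕ) (x : Fin (2*n)) (L : ℕ) (z : Fin (2*n)) :
    (bad4 k x L z).card ≤ L + 2 * k := by
  refine (Finset.card_union_le _ _).trans ?_
  have h1 : (arc4 x L).card ≤ L := by
    refine (card_at4_le _ _).trans ?_
    simp
  have h2 := (card_at4_le z (Icc 1 k ∪ Ico (2 * n - k) (2 * n))).trans (Finset.card_union_le _ _)
  simp only [Nat.card_Icc, Nat.card_Ico] at h2
  omega

/-- useful endpoints -/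
noncomputable def good4 {n : ℕ} (k : ℕ) (x : Fin (2*n)) (L : ℕ) (f : Fin (2*n) → Fin (2*n)) :
    Finset (Fin (2*n)) :=
  (arc4 x L).filter fun z => f z ∉ bad4 k x L z

/-- the bad event at `x`, `L` -/
def E4 {n : ℕ} (k : ℕ) (x : Fin (2*n)) (L : ℕ) (f : Fin (2*n) → Fin (2*n)) : Prop :=
  d4 x (f x) = L + 1 ∧ (good4 k x L f).card < k

lemma boundA4 {n : ℕ} (k : ℕ) (x : Fin (2*n)) (L r m : ℕ) (hkL : k ≤ L) (hL : L + 1 < 2 * n)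
    (hr : r = (L - k) / 2 + 1) (hm : n = m + r + 1) :
    cnt4 (Finset.univ : Finset (Fin (2*n))) (E4 k x L)
      ≤ L.choose r * ((L + 2 * k) ^ r * M4 m) := by
  obtain ⟨y, hy⟩ := d4_surj x (L + 1) hL
  have hyx : y ≠ x := by
    rintro rfl
    simp [d4] at hy
  refine (cnt4_union _ _ (powersetCard r (arc4 x L))
    (fun R f => (∀ b ∈ R, f b ∈ bad4 k x L b ∧ f b ∉ R) ∧ f x = y) ?_).trans ?_
  · intro f hf hE
    obtain ⟨h1, h2⟩ := hE
    simp only [Inv4, mem_filter, mem_univ, true_and] at hf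
    have hff := hf.1
    set B := (arc4 x L).filter fun z => f z ∈ bad4 k x L z with hB
    have hBc : L - k + 1 ≤ B.card := by
      have := Finset.card_filter_add_card_filter_not (s := arc4 x L) (fun z => f z ∈ bad4 k x L z)
      rw [card_arc4 x L (by omega)] at this
      change B.card + (good4 k x L f).card = L at this
      omega
    set R0 := B.filter fun z => f z ∉ arc4 x L ∨ z < f z with hR0
    have hsub : B ⊆ R0 ∪ R0.image f := by
      intro z hz
      by_cases hz0 : z ∈ R0
      · exact mem_union_left _ hz0
      · apply mem_union_right
        rw [mem_image]
        have hzA : z ∈ arc4 x L := (mem_filter.1 hz).1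
        have hz' : ¬ (f z ∉ arc4 x L ∨ z < f z) := fun h => hz0 (mem_filter.2 ⟨hz, h⟩)
        push Not at hz'
        have hne : f z ≠ z := fun h => by have := (hf.2 z).1 h; simp at this
        refine ⟨f z, ?_, hff z⟩
        rw [hR0, mem_filter, hB, mem_filter, hff]
        exact ⟨⟨hz'.1, mem_union_left _ hzA⟩, Or.inr (lt_of_le_of_ne hz'.2 hne)⟩
    have hc : B.card ≤ 2 * R0.card := by
      have h3 := (Finset.card_le_card hsub).trans (Finset.card_union_le _ _)
      have h4 : (R0.image f).card ≤ R0.card := Finset.card_image_le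
      omega
    obtain ⟨R, hRs, hRc⟩ := Finset.exists_subset_card_eq (s := R0) (n := r) (by omega)
    refine ⟨R, ?_, ?_, ?_⟩
    · rw [mem_powersetCard]
      refine ⟨fun z hz => ?_, hRc⟩
      exact (mem_filter.1 (mem_filter.1 (hRs hz)).1).1
    · intro b hb
      have hb0 := mem_filter.1 (hRs hb)
      have hb1 := mem_filter.1 hb0.1
      refine ⟨hb1.2, fun hfb => ?_⟩
      have hc0 := mem_filter.1 (hRs hfb)
      have hc1 := mem_filter.1 hc0.1
      rw [hff] at hc0
      have e1 : b < f b := by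
        rcases hb0.2 with h | h
        · exact absurd hc1.1 h
        · exact h
      have e2 : f b < b := by
        rcases hc0.2 with h | h
        · exact absurd hb1.1 h
        · exact h
      exact absurd e1 (not_lt.2 e2.le)
    · exact d4_inj x _ _ (by rw [h1, hy])
  · calc _ ≤ ∑ R ∈ powersetCard r (arc4 x L), (L + 2 * k) ^ r * M4 m := by
          apply Finset.sum_le_sum
          intro R hR
          rw [mem_powersetCard] at hR
          refine count_chord4 (bad4 k x L) _ (card_bad4 k x L) r m _ R x y (mem_univ _) (mem_univ _)
            hyx ?_ hR.2.symm ?_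
          · intro z hz
            have := (mem_arc4 _ _ _).1 (hR.1 hz)
            simp only [Finset.mem_sdiff, mem_univ, true_and, mem_insert, mem_singleton]
            rintro (rfl | rfl)
            · simp [d4] at this
            · omega
          · rw [Finset.card_univ, Fintype.card_fin]; omega
      _ = _ := by
          rw [Finset.sum_const, card_powersetCard, card_arc4 x L (by omega), smul_eq_mul]

lemma boundB4 {n : ℕ} (k : ℕ) (x : Fin (2*n)) (L s r m : ℕ) (hL : L < 2 * n)
    (hks : k * s ≤ L) (hr : 2 * r ≤ s + 1) (hm : n = m + r) :
    cnt4 (Finset.univ : Finset (Fin (2*n))) (E4 k x L)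
      ≤ k * ((L + 2 * k) ^ r * M4 m) := by
  have hqs : ∀ q < k, q * s + s ≤ L := by
    intro q hq
    calc q * s + s = (q + 1) * s := by ring
      _ ≤ k * s := Nat.mul_le_mul_right _ hq
      _ ≤ L := hks
  refine (cnt4_union _ _ (range k)
    (fun q f => ∀ b ∈ at4 x (Ioc (q * s) (q * s + s)), f b ∈ bad4 k x L b) ?_).trans ?_
  · intro f hf hE
    by_contra hcon
    push Not at hcon
    have : range k ⊆ (good4 k x L f).image fun z => (d4 x z - 1) / s := by
      intro q hq
      obtain ⟨b, hb, hb'⟩ := hcon q hq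
      rw [mem_at4, mem_Ioc] at hb
      rw [mem_image]
      refine ⟨b, ?_, ?_⟩
      · rw [good4, mem_filter, mem_arc4]
        have := hqs q (mem_range.1 hq)
        exact ⟨⟨by omega, by omega⟩, hb'⟩
      · have hs : 0 < s := by omega
        rw [Nat.div_eq_iff hs]
        have e : s * q = q * s := mul_comm _ _
        omega
    have h1 := (Finset.card_le_card this).trans Finset.card_image_le
    rw [card_range] at h1
    have := hE.2
    omega
  · calc _ ≤ ∑ q ∈ range k, (L + 2 * k) ^ r * M4 m := by
          apply Finset.sum_le_sum
          intro q hq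
          have := hqs q (mem_range.1 hq)
          refine count_block4 (bad4 k x L) _ (card_bad4 k x L) r m _ _ (subset_univ _) ?_ ?_
          · rw [card_at4]
            · simpa using hr
            · intro i hi
              rw [mem_Ioc] at hi
              omega
          · rw [Finset.card_univ, Fintype.card_fin]; omega
      _ = _ := by
          rw [Finset.sum_const, card_range, smul_eq_mul]

/-! ### Deterministic part -/

lemma chordLength_near4 {n : ℕ} (C : ChordDiagram n) (k : ℕ) (z : Fin (2*n))
    (h : chordLength C z < k) : d4 z (C.1 z) ∈ Icc 1 k ∪ Ico (2 * n - k) (2 * n) := by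
  have hne : (C.1 z : ℕ) ≠ z := fun h => C.2.2 z (Fin.ext h)
  have h1 := z.2
  have h2 := (C.1 z).2
  unfold chordLength at h
  rw [mem_union, mem_Icc, mem_Ico]
  unfold d4
  split_ifs <;> omega

lemma chordLength_symm4 {n : ℕ} (C : ChordDiagram n) (z : Fin (2*n)) :
    chordLength C (C.1 z) = chordLength C z := by
  unfold chordLength
  rw [C.2.1 z, max_comm, min_comm (C.1 z : ℕ)]

lemma arc_choice4 {n : ℕ} (C : ChordDiagram n) (x : Fin (2*n)) :
    chordLength C x < n ∧
    ∃ x', d4 x' (C.1 x') = chordLength C x + 1 ∧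
      ∀ u, Crosses C x u ↔ Xor' (u ∈ arc4 x' (chordLength C x))
        (C.1 u ∈ arc4 x' (chordLength C x)) := by
  have hne : (C.1 x : ℕ) ≠ x := fun h => C.2.2 x (Fin.ext h)
  have h1 := x.2
  have h2 := (C.1 x).2
  have hlt : chordLength C x < n := by unfold chordLength; omega
  refine ⟨hlt, ?_⟩
  have key : ∀ x', (x' = x ∨ x' = C.1 x) → d4 x' (C.1 x') = chordLength C x + 1 →
      ∀ u, Crosses C x u ↔ Xor' (u ∈ arc4 x' (chordLength C x))
        (C.1 u ∈ arc4 x' (chordLength C x)) := by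
    intro x' hx' hd
    have hbet : (∀ u, Between x (C.1 x) u ↔ u ∈ arc4 x' (chordLength C x)) ∨
        (∀ u, u ≠ x → u ≠ C.1 x → (Between x (C.1 x) u ↔ ¬ u ∈ arc4 x' (chordLength C x))) := by
      rcases hx' with rfl | rfl
      · by_cases hxy : x' < C.1 x'
        · left
          intro u
          have h3 := u.2
          rw [mem_arc4, Between, min_eq_left hxy.le, max_eq_right hxy.le, Fin.lt_def, Fin.lt_def]
          rw [Fin.lt_def] at hxy
          unfold d4 at hd ⊢
          split_ifs at hd ⊢ <;> omega
        · right
          intro u hu hu'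
          have h3 := u.2
          rw [Ne, Fin.ext_iff] at hu hu'
          have hxy' : C.1 x' ≤ x' := not_lt.1 hxy
          rw [mem_arc4, Between, min_eq_right hxy', max_eq_left hxy', Fin.lt_def, Fin.lt_def]
          rw [Fin.lt_def] at hxy
          unfold d4 at hd ⊢
          split_ifs at hd ⊢ <;> omega
      · rw [C.2.1] at hd
        by_cases hxy : x < C.1 x
        · right
          intro u hu hu'
          have h3 := u.2
          rw [Ne, Fin.ext_iff] at hu hu'
          rw [mem_arc4, Between, min_eq_left hxy.le, max_eq_right hxy.le, Fin.lt_def, Fin.lt_def]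
          rw [Fin.lt_def] at hxy
          unfold d4 at hd ⊢
          split_ifs at hd ⊢ <;> omega
        · left
          intro u
          have h3 := u.2
          have hxy' : C.1 x ≤ x := not_lt.1 hxy
          rw [mem_arc4, Between, min_eq_right hxy', max_eq_left hxy', Fin.lt_def, Fin.lt_def]
          rw [Fin.lt_def] at hxy
          unfold d4 at hd ⊢
          split_ifs at hd ⊢ <;> omega
    have hend : ∀ u, (u = x ∨ u = C.1 x) → ¬ Between x (C.1 x) u ∧
        ¬ u ∈ arc4 x' (chordLength C x) := by
      intro u hu
      constructor
      · rw [Between, lt_max_iff, min_lt_iff]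
        rcases hu with rfl | rfl <;> simp <;> exact le_of_lt
      · have e1 : x' ∉ arc4 x' (chordLength C x) := by
          rw [mem_arc4]; simp [d4]
        have e2 : C.1 x' ∉ arc4 x' (chordLength C x) := by
          rw [mem_arc4]; omega
        rcases hx' with rfl | rfl
        · rcases hu with rfl | rfl <;> assumption
        · rw [C.2.1] at e2
          rcases hu with rfl | rfl <;> assumption
    intro u
    unfold Crosses
    rcases hbet with hb | hb
    · rw [hb, hb]
    · by_cases hu : u = x ∨ u = C.1 x
      · have hu' : C.1 u = x ∨ C.1 u = C.1 x := by
          rcases hu with rfl | rfl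
          · right; rfl
          · left; rw [C.2.1]
        have := hend u hu
        have := hend _ hu'
        simp only [Xor', Xor]
        tauto
      · push Not at hu
        have hu1 : C.1 u ≠ x := fun h => hu.2 (by rw [← h, C.2.1])
        have hu2 : C.1 u ≠ C.1 x := fun h => hu.1 (by rw [← C.2.1 u, h, C.2.1])
        rw [hb u hu.1 hu.2, hb _ hu1 hu2]
        simp only [Xor', Xor]
        tauto
  have hd : d4 x (C.1 x) = chordLength C x + 1 ∨ d4 (C.1 x) x = chordLength C x + 1 := by
    unfold chordLength d4
    split_ifs <;> omega
  rcases hd with hd | hd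
  · exact ⟨x, hd, key x (Or.inl rfl) hd⟩
  · have hd' : d4 (C.1 x) (C.1 (C.1 x)) = chordLength C x + 1 := by rw [C.2.1, hd]
    exact ⟨C.1 x, hd', key _ (Or.inr rfl) hd'⟩

lemma degree_le4 {n : ℕ} (C : ChordDiagram n) (S : Finset (Fin (2*n))) (x : Fin (2*n)) :
    degreeIn C S x ≤ chordLength C x := by
  obtain ⟨hlt, x', hd, hcr⟩ := arc_choice4 C x
  rw [← card_arc4 x' (chordLength C x) (by omega)]
  unfold degreeIn
  apply Finset.card_le_card_of_injOn
    (fun u => if u ∈ arc4 x' (chordLength C x) then u else C.1 u)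
  · intro u hu
    simp only [mem_coe, mem_filter] at hu ⊢
    have := (hcr u).1 hu.2.2
    by_cases h : u ∈ arc4 x' (chordLength C x)
    · simp [h]
    · simp only [h, if_false]
      simp only [Xor', Xor] at this
      tauto
  · intro u hu v hv huv
    simp only [mem_coe, mem_filter] at hu hv huv
    have h1 := hu.2.1
    have h2 := hv.2.1
    split_ifs at huv with a b b
    · exact huv
    · rw [huv, C.2.1] at h1
      exact absurd h1 (not_lt.2 h2.le)
    · rw [← huv, C.2.1] at h2
      exact absurd h2 (not_lt.2 h1.le)
    · rw [← C.2.1 u, huv, C.2.1]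

lemma det4 {n k : ℕ} (C : ChordDiagram n) (x : Fin (2*n)) (hk : k ≤ chordLength C x)
    (hdeg : degreeIn C (lenAtLeast n k C) x < k) :
    ∃ x', ∃ L ∈ Ico k n, E4 k x' L C.1 := by
  obtain ⟨hlt, x', hd, hcr⟩ := arc_choice4 C x
  refine ⟨x', chordLength C x, mem_Ico.2 ⟨hk, hlt⟩, hd, lt_of_le_of_lt ?_ hdeg⟩
  unfold degreeIn
  have hg : ∀ z ∈ good4 k x' (chordLength C x) C.1, z ∈ arc4 x' (chordLength C x) ∧
      C.1 z ∉ arc4 x' (chordLength C x) ∧ k ≤ chordLength C z := by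
    intro z hz
    rw [good4, mem_filter, bad4, mem_union, not_or] at hz
    refine ⟨hz.1, hz.2.1, ?_⟩
    by_contra h
    exact hz.2.2 ((mem_at4 _ _ _).2 (chordLength_near4 C k z (not_le.1 h)))
  apply Finset.card_le_card_of_injOn (fun z => min z (C.1 z))
  · intro z hz
    have h := hg z hz
    simp only [mem_coe, mem_filter, lenAtLeast, mem_univ, true_and]
    rcases lt_or_gt_of_ne (C.2.2 z) with h1 | h1
    · rw [min_eq_right h1.le, chordLength_symm4, C.2.1]
      refine ⟨h.2.2, h1, (hcr _).2 ?_⟩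
      rw [C.2.1]
      simp only [Xor', Xor]
      tauto
    · rw [min_eq_left h1.le]
      refine ⟨h.2.2, h1, (hcr _).2 ?_⟩
      simp only [Xor', Xor]
      tauto
  · intro z hz w hw hzw
    have h := hg z hz
    have h' := hg w hw
    simp only at hzw
    have hcases : z = w ∨ z = C.1 w ∨ C.1 z = w ∨ C.1 z = C.1 w := by
      rcases min_choice z (C.1 z) with a | a <;> rcases min_choice w (C.1 w) with b | b <;>
        rw [a, b] at hzw <;> tauto
    rcases hcases with e | e | e | e
    · exact e
    · exact absurd (e ▸ h.1) h'.2.1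
    · exact absurd (e ▸ h'.1) h.2.1
    · rw [← C.2.1 z, e, C.2.1]

lemma core4 {n k : ℕ} (C : ChordDiagram n)
    (h : ∀ x ∈ lenAtLeast n k C, k ≤ degreeIn C (lenAtLeast n k C) x) :
    kCore n k C = lenAtLeast n k C := by
  ext x
  simp only [kCore, mem_filter, mem_univ, true_and]
  constructor
  · rintro ⟨S, hS, hx⟩
    simp only [lenAtLeast, mem_filter, mem_univ, true_and]
    exact (hS.2 x hx).trans (degree_le4 C S x)
  · intro hx
    refine ⟨_, ⟨?_, h⟩, hx⟩
    intro y hy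
    simp only [lenAtLeast, mem_filter, mem_univ, true_and] at hy ⊢
    rwa [chordLength_symm4]

lemma union4 (n k : ℕ) :
    (Finset.univ.filter fun C : ChordDiagram n => ¬
      ((∀ x ∈ lenAtLeast n k C, k ≤ degreeIn C (lenAtLeast n k C) x) ∧
        kCore n k C = lenAtLeast n k C)).card
      ≤ ∑ x : Fin (2*n), ∑ L ∈ Ico k n, cnt4 (Finset.univ : Finset (Fin (2*n))) (E4 k x L) := by
  calc _ ≤ cnt4 (Finset.univ : Finset (Fin (2*n)))
        (fun f => ∃ p ∈ (Finset.univ : Finset (Fin (2*n))) ×ˢ Ico k n, E4 k p.1 p.2 f) := by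
        unfold cnt4
        apply Finset.card_le_card_of_injOn (fun C => C.1)
        · intro C hC
          simp only [mem_coe, mem_filter, mem_univ, true_and] at hC ⊢
          refine ⟨?_, ?_⟩
          · simp only [Inv4, mem_filter, mem_univ, true_and, not_true_eq_false, iff_false]
            exact C.2
          · have : ¬ ∀ x ∈ lenAtLeast n k C, k ≤ degreeIn C (lenAtLeast n k C) x :=
              fun h => hC ⟨h, core4 C h⟩
            push Not at this
            obtain ⟨x, hx, hdeg⟩ := this
            simp only [lenAtLeast, mem_filter, mem_univ, true_and] at hx
            obtain ⟨x', L, hL, hE⟩ := det4 C x hx hdeg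
            exact ⟨(x', L), mem_product.2 ⟨mem_univ _, hL⟩, hE⟩
        · intro C _ D _ h
          exact Subtype.ext h
    _ ≤ ∑ p ∈ (Finset.univ : Finset (Fin (2*n))) ×ˢ Ico k n,
          cnt4 (Finset.univ : Finset (Fin (2*n))) (E4 k p.1 p.2) :=
        cnt4_union _ _ _ (fun (p : Fin (2*n) × ℕ) f => E4 k p.1 p.2 f) (fun f _ h => h)
    _ = _ := by rw [Finset.sum_product]

lemma total4 (n : ℕ) : (Finset.univ : Finset (ChordDiagram n)).card = M4 n := by
  rw [← card_Inv4 n (Finset.univ : Finset (Fin (2*n))) (by simp)]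
  apply Finset.card_bij (fun C _ => C.1)
  · intro C _
    simp only [Inv4, mem_filter, mem_univ, true_and, not_true_eq_false, iff_false]
    exact C.2
  · intro C _ D _ h
    exact Subtype.ext h
  · intro f hf
    simp only [Inv4, mem_filter, mem_univ, true_and, not_true_eq_false, iff_false] at hf
    exact ⟨⟨f, hf⟩, mem_univ _, rfl⟩

/-! ### Asymptotics -/

lemma M4_add (m r : ℕ) : (M4 m : ℝ) * (2 * m + 1) ^ r ≤ M4 (m + r) := by
  induction r with
  | zero => simp
  | succ r ih =>
    rw [← add_assoc]
    simp only [M4]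
    push_cast
    have h0 : (0:ℝ) < M4 (m + r) := by exact_mod_cast M4_pos _
    have hr : (0:ℝ) ≤ r := Nat.cast_nonneg r
    have hm : (0:ℝ) ≤ m := Nat.cast_nonneg m
    calc (M4 m : ℝ) * (2 * m + 1) ^ (r + 1) = (2 * m + 1) * (M4 m * (2 * m + 1) ^ r) := by ring
      _ ≤ (2 * m + 1) * M4 (m + r) := by gcongr
      _ ≤ (2 * (m + r) + 1) * M4 (m + r) := by gcongr; linarith

lemma choose_bound4 (L r : ℕ) (hr : 0 < r) : (L.choose r : ℝ) ≤ (3 * L / r) ^ r := by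
  have h1 : (L.choose r : ℝ) ≤ (L:ℝ) ^ r / r.factorial := Nat.choose_le_pow_div r L
  have h2 := Real.pow_div_factorial_le_exp (r:ℝ) (Nat.cast_nonneg r) r
  have h3 : Real.exp r ≤ 3 ^ r := by
    have : Real.exp r = (Real.exp 1) ^ r := by rw [← Real.exp_nat_mul]; simp
    rw [this]
    have h4 : Real.exp 1 ≤ 3 := by linarith [Real.exp_one_lt_d9]
    gcongr
  have hr' : (0:ℝ) < r := by exact_mod_cast hr
  have hf : (0:ℝ) < r.factorial := by exact_mod_cast r.factorial_pos
  have h5 : (r:ℝ) ^ r ≤ 3 ^ r * r.factorial := by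
    have := h2.trans h3
    rwa [div_le_iff₀ hf] at this
  refine h1.trans ?_
  rw [div_pow, mul_pow, div_le_div_iff₀ hf (by positivity)]
  calc (L:ℝ) ^ r * r ^ r ≤ L ^ r * (3 ^ r * r.factorial) := by gcongr
    _ = _ := by ring

lemma realA4 (n k j : ℕ) (x : Fin (2*n)) (hn : 400 ≤ n) (hk : 90000 * k ^ 2 ≤ n)
    (hj : 288 * j ≤ n) (hkj : k + j < n) :
    (2 * n : ℝ) * cnt4 (Finset.univ : Finset (Fin (2*n))) (E4 k x (k + j))
      ≤ 4 * (18 * ((k:ℝ)^2 / n) + 36 * (j / n)) * (1/2) ^ j * M4 n := by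
  set r := j / 2 + 1 with hr
  obtain ⟨m, hm⟩ : ∃ m, n = m + r + 1 := ⟨n - r - 1, by omega⟩
  have hA := boundA4 k x (k + j) r m (by omega) (by omega) (by rw [hr]; congr 2; omega) hm
  have hA' : (cnt4 (Finset.univ : Finset (Fin (2*n))) (E4 k x (k + j)) : ℝ) ≤
      ((k + j).choose r : ℝ) * (((k + j : ℕ) + 2 * k : ℝ) ^ r * M4 m) := by exact_mod_cast hA
  have hc := choose_bound4 (k + j) r (by omega)
  have hn0 : (0:ℝ) < n := by exact_mod_cast (by omega : 0 < n)
  have hm1 : (n:ℝ) ≤ 2 * m + 1 := by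
    have : n ≤ 2 * m + 1 := by omega
    exact_mod_cast this
  have hr0 : (0:ℝ) < r := by exact_mod_cast (by omega : 0 < r)
  have hr1 : (1:ℝ) ≤ r := by exact_mod_cast (by omega : 1 ≤ r)
  have hr2 : (j:ℝ) ≤ 2 * r := by exact_mod_cast (by omega : j ≤ 2 * r)
  have hj0 : (0:ℝ) ≤ j := Nat.cast_nonneg j
  have hk0 : (0:ℝ) ≤ k := Nat.cast_nonneg k
  have hMm : (0:ℝ) < M4 m := by exact_mod_cast M4_pos m
  set q : ℝ := 18 * ((k:ℝ)^2 / n) + 36 * (j / n) with hq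
  have hq0 : 0 ≤ q := by positivity
  have hq4 : q ≤ 1/4 := by
    have e1 : (k:ℝ)^2 / n ≤ 1/90000 := by
      rw [div_le_iff₀ hn0]
      have : (90000:ℝ) * (k:ℝ)^2 ≤ n := by exact_mod_cast hk
      linarith
    have e2 : (j:ℝ) / n ≤ 1/288 := by
      rw [div_le_iff₀ hn0]
      have : (288:ℝ) * (j:ℝ) ≤ n := by exact_mod_cast hj
      linarith
    rw [hq]; linarith
  -- base inequality
  have hbase : (3 * ((k + j : ℕ) : ℝ) / r) * ((k + j : ℕ) + 2 * k : ℝ) ≤ q * (2 * m + 1) := by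
    have e1 : (3 * ((k + j : ℕ) : ℝ) / r) * ((k + j : ℕ) + 2 * k : ℝ) ≤ q * n := by
      have e2 : q * n = 18 * (k:ℝ)^2 + 36 * j := by rw [hq]; field_simp
      rw [e2, div_mul_eq_mul_div, div_le_iff₀ hr0]
      push_cast
      have a1 : (k:ℝ)^2 ≤ k^2 * r := by nlinarith [sq_nonneg (k:ℝ)]
      have a2 : (j:ℝ)^2 ≤ 2 * j * r := by nlinarith
      nlinarith [sq_nonneg ((k:ℝ) - j)]
    exact e1.trans (by gcongr)
  have hprod : ((k + j).choose r : ℝ) * (((k + j : ℕ) + 2 * k : ℝ) ^ r * M4 m)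
      ≤ q ^ r * ((2 * m + 1) ^ r * M4 m) := by
    calc ((k + j).choose r : ℝ) * (((k + j : ℕ) + 2 * k : ℝ) ^ r * M4 m)
        ≤ (3 * ((k + j : ℕ) : ℝ) / r) ^ r * (((k + j : ℕ) + 2 * k : ℝ) ^ r * M4 m) := by gcongr
      _ = ((3 * ((k + j : ℕ) : ℝ) / r) * ((k + j : ℕ) + 2 * k : ℝ)) ^ r * M4 m := by
          rw [mul_pow]; ring
      _ ≤ (q * (2 * m + 1)) ^ r * M4 m := by gcongr
      _ = _ := by rw [mul_pow]; ring
  have hM : (n:ℝ) * ((2 * m + 1) ^ r * M4 m) ≤ M4 n := by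
    have h1 := M4_add m r
    have h2 : (M4 n : ℝ) = (2 * (m + r : ℕ) + 1) * M4 (m + r) := by
      rw [hm]; simp only [M4]; push_cast; ring
    rw [h2]
    have h3 : (n:ℝ) ≤ 2 * (m + r : ℕ) + 1 := by
      exact_mod_cast (by omega : n ≤ 2 * (m + r) + 1)
    calc (n:ℝ) * ((2 * m + 1) ^ r * M4 m) ≤ n * M4 (m + r) := by
          gcongr; linarith
      _ ≤ _ := by gcongr
  have hqr : q ^ r ≤ q * (2 * (1/2) ^ j) := by
    rw [hr, pow_succ']
    gcongr
    calc q ^ (j/2) ≤ (1/4 : ℝ) ^ (j/2) := by gcongr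
      _ = 2 * (1/2 : ℝ) ^ (2 * (j/2) + 1) := by
          rw [pow_succ, pow_mul]; norm_num; ring
      _ ≤ 2 * (1/2 : ℝ) ^ j := by
          gcongr ?_ * ?_
          exact pow_le_pow_of_le_one (by norm_num) (by norm_num) (by omega)
  have hMn : (0:ℝ) < M4 n := by exact_mod_cast M4_pos n
  calc (2 * n : ℝ) * cnt4 (Finset.univ : Finset (Fin (2*n))) (E4 k x (k + j))
      ≤ (2 * n : ℝ) * (q ^ r * ((2 * m + 1) ^ r * M4 m)) := by
        gcongr; exact hA'.trans hprod
    _ = 2 * q ^ r * (n * ((2 * m + 1) ^ r * M4 m)) := by ring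
    _ ≤ 2 * q ^ r * M4 n := by gcongr
    _ ≤ 2 * (q * (2 * (1/2) ^ j)) * M4 n := by gcongr
    _ = _ := by ring

lemma realB4 (n k j : ℕ) (x : Fin (2*n)) (hn : 400 ≤ n) (hk : 90000 * k ^ 2 ≤ n)
    (hj : n < 288 * j) (hkj : k + j < n) :
    (2 * n : ℝ) * cnt4 (Finset.univ : Finset (Fin (2*n))) (E4 k x (k + j))
      ≤ 2 * (n:ℝ) ^ 2 * (3/4) ^ (Nat.sqrt n / 2) * M4 n := by
  set s := Nat.sqrt n with hs
  set r := s / 2 with hr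
  have hs1 : s * s ≤ n := Nat.sqrt_le n
  have hs2 : 20 ≤ s := by rw [hs, Nat.le_sqrt]; omega
  have hs3 : 20 * s ≤ n := le_trans (Nat.mul_le_mul_right s hs2) hs1
  have hkk : k ≤ k ^ 2 := by nlinarith [Nat.zero_le k, sq_nonneg ((k:ℤ) - 1)]
  have hks : k * s ≤ k + j := by
    have h1 : 300 * (k * s) ≤ n := by
      by_contra h
      push Not at h
      have h2 : n * n < (300 * (k * s)) * (300 * (k * s)) := Nat.mul_self_lt_mul_self h
      have h3 : (90000 * k ^ 2) * (s * s) ≤ n * n := Nat.mul_le_mul hk hs1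
      nlinarith
    omega
  obtain ⟨m, hm⟩ : ∃ m, n = m + r := ⟨n - r, by omega⟩
  have hB := boundB4 k x (k + j) s r m (by omega) hks (by omega) hm
  have hB' : (cnt4 (Finset.univ : Finset (Fin (2*n))) (E4 k x (k + j)) : ℝ) ≤
      (k : ℝ) * (((k + j : ℕ) + 2 * k : ℝ) ^ r * M4 m) := by exact_mod_cast hB
  have hMm : (0:ℝ) < M4 m := by exact_mod_cast M4_pos m
  have hbase : ((k + j : ℕ) + 2 * k : ℝ) ≤ 3/4 * (2 * m + 1) := by
    have : 4 * (k + j + 2 * k) ≤ 3 * (2 * m + 1) := by omega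
    have : (4:ℝ) * ((k + j : ℕ) + 2 * k) ≤ 3 * (2 * m + 1) := by exact_mod_cast this
    linarith
  have hkn : (k:ℝ) ≤ n := by exact_mod_cast (by omega : k ≤ n)
  have hM : (2 * m + 1 : ℝ) ^ r * M4 m ≤ M4 n := by
    have := M4_add m r
    rw [← hm] at this
    linarith
  calc (2 * n : ℝ) * cnt4 (Finset.univ : Finset (Fin (2*n))) (E4 k x (k + j))
      ≤ (2 * n : ℝ) * ((k : ℝ) * (((k + j : ℕ) + 2 * k : ℝ) ^ r * M4 m)) := by gcongr
    _ ≤ (2 * n : ℝ) * ((n : ℝ) * ((3/4 * (2 * m + 1)) ^ r * M4 m)) := by gcongr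
    _ = 2 * (n:ℝ)^2 * (3/4) ^ r * ((2 * m + 1 : ℝ) ^ r * M4 m) := by rw [mul_pow]; ring
    _ ≤ _ := by gcongr

lemma geo0 (N : ℕ) : ∑ j ∈ range N, (1/2 : ℝ) ^ j ≤ 2 := by
  have : ∑ j ∈ range N, (1/2 : ℝ) ^ j = 2 - 2 * (1/2) ^ N := by
    induction N with
    | zero => simp
    | succ N ih => rw [sum_range_succ, ih]; ring
  rw [this]
  have : (0:ℝ) ≤ (1/2) ^ N := by positivity
  linarith

lemma geo1 (N : ℕ) : ∑ j ∈ range N, (j : ℝ) * (1/2 : ℝ) ^ j ≤ 2 := by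
  have : ∑ j ∈ range N, (j:ℝ) * (1/2 : ℝ) ^ j = 2 - (N + 1) * 2 * (1/2) ^ N := by
    induction N with
    | zero => simp
    | succ N ih => rw [sum_range_succ, ih]; push_cast; ring
  rw [this]
  have : (0:ℝ) ≤ (N + 1) * 2 * (1/2) ^ N := by positivity
  linarith

/-- the error term -/
noncomputable def err4 (n k : ℕ) : ℝ :=
  144 * ((k:ℝ)^2 / n) + 288 * (1 / (n:ℝ)) + 2 * (n:ℝ) ^ 3 * (3/4) ^ (Nat.sqrt n / 2)

lemma finite4 (n k : ℕ) (hn : 400 ≤ n) (hk : 90000 * k ^ 2 ≤ n) :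
    ((∑ x : Fin (2*n), ∑ L ∈ Ico k n, cnt4 (Finset.univ : Finset (Fin (2*n))) (E4 k x L) : ℕ) : ℝ)
      ≤ err4 n k * M4 n := by
  have hn0 : (0:ℝ) < n := by exact_mod_cast (by omega : 0 < n)
  have hMn : (0:ℝ) < M4 n := by exact_mod_cast M4_pos n
  have key : ∀ x : Fin (2*n), (2 * n : ℝ) *
      ((∑ L ∈ Ico k n, cnt4 (Finset.univ : Finset (Fin (2*n))) (E4 k x L) : ℕ) : ℝ)
      ≤ err4 n k * M4 n := by
    intro x
    rw [Finset.sum_Ico_eq_sum_range]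
    push_cast
    rw [Finset.mul_sum]
    have hh : (0:ℝ) ≤ 2 * (n:ℝ) ^ 2 * (3/4) ^ (Nat.sqrt n / 2) := by positivity
    calc _ ≤ ∑ j ∈ range (n - k), (72 * ((k:ℝ)^2 / n) * (1/2) ^ j
              + 144 * (1 / n) * (j * (1/2) ^ j)
              + 2 * (n:ℝ) ^ 2 * (3/4) ^ (Nat.sqrt n / 2)) * M4 n := by
          apply Finset.sum_le_sum
          intro j hj
          rw [mem_range] at hj
          by_cases h : 288 * j ≤ n
          · refine (realA4 n k j x hn hk h (by omega)).trans ?_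
            gcongr
            have : 4 * (18 * ((k:ℝ)^2 / n) + 36 * (j / n)) * (1/2) ^ j =
              72 * ((k:ℝ)^2 / n) * (1/2) ^ j + 144 * (1 / n) * (j * (1/2) ^ j) := by ring
            linarith
          · refine (realB4 n k j x hn hk (by omega) (by omega)).trans ?_
            gcongr
            have : (0:ℝ) ≤ 72 * ((k:ℝ)^2 / n) * (1/2) ^ j + 144 * (1 / n) * (j * (1/2) ^ j) := by
              positivity
            linarith
      _ = (72 * ((k:ℝ)^2 / n) * (∑ j ∈ range (n - k), (1/2 : ℝ) ^ j)
            + 144 * (1 / n) * (∑ j ∈ range (n - k), (j : ℝ) * (1/2 : ℝ) ^ j)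
            + (n - k : ℕ) * (2 * (n:ℝ) ^ 2 * (3/4) ^ (Nat.sqrt n / 2))) * M4 n := by
          rw [← Finset.sum_mul, Finset.sum_add_distrib, Finset.sum_add_distrib, ← Finset.mul_sum,
            ← Finset.mul_sum, Finset.sum_const, card_range, nsmul_eq_mul]
      _ ≤ (72 * ((k:ℝ)^2 / n) * 2 + 144 * (1 / n) * 2
            + n * (2 * (n:ℝ) ^ 2 * (3/4) ^ (Nat.sqrt n / 2))) * M4 n := by
          gcongr
          · exact geo0 _
          · exact geo1 _
          · exact Nat.sub_le _ _
      _ = _ := by unfold err4; ring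
  have h2n : (0:ℝ) < 2 * n := by positivity
  push_cast
  have hsum : ∑ x : Fin (2*n),
      (∑ L ∈ Ico k n, (cnt4 (Finset.univ : Finset (Fin (2*n))) (E4 k x L) : ℝ))
      ≤ ∑ x : Fin (2*n), (err4 n k * M4 n) / (2 * n) := by
    apply Finset.sum_le_sum
    intro x _
    rw [le_div_iff₀ h2n, mul_comm]
    have := key x
    push_cast at this
    exact this
  refine hsum.trans (le_of_eq ?_)
  rw [Finset.sum_const, Finset.card_univ, Fintype.card_fin, nsmul_eq_mul]
  push_cast
  field_simp

lemma err4_tendsto (k : ℕ → ℕ)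
    (hk : Filter.Tendsto (fun n : ℕ => ((k n : ℝ))^2 / (n : ℝ)) Filter.atTop (nhds 0)) :
    Filter.Tendsto (fun n => err4 n (k n)) atTop (nhds 0) := by
  have h1 : Tendsto (fun n : ℕ => (1:ℝ) / n) atTop (nhds 0) := tendsto_one_div_atTop_nhds_zero_nat
  have hsq : Tendsto (fun n : ℕ => Nat.sqrt n / 2 + 1) atTop atTop := by
    rw [tendsto_atTop]
    intro b
    filter_upwards [eventually_ge_atTop ((2*b) * (2*b))] with n hn
    have := Nat.le_sqrt.2 hn
    omega
  have h2 : Tendsto (fun r : ℕ => (r:ℝ) ^ 6 * (3/4 : ℝ) ^ r) atTop (nhds 0) :=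
    tendsto_pow_const_mul_const_pow_of_abs_lt_one 6 (by rw [abs_of_pos] <;> norm_num)
  have h3 := (h2.comp hsq).const_mul (2 * 64 * (4/3) : ℝ)
  have h4 : Tendsto (fun n : ℕ => 2 * (n:ℝ) ^ 3 * (3/4) ^ (Nat.sqrt n / 2)) atTop (nhds 0) := by
    refine squeeze_zero (fun n => by positivity) (fun n => ?_) (by simpa using h3)
    have hle : (n:ℝ) ≤ (2 * ((Nat.sqrt n / 2 + 1 : ℕ) : ℝ)) ^ 2 := by
      have h5 := Nat.lt_succ_sqrt n
      have h6 : Nat.succ (Nat.sqrt n) ≤ 2 * (Nat.sqrt n / 2 + 1) := by omega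
      have h7 : n ≤ (2 * (Nat.sqrt n / 2 + 1)) ^ 2 := by
        rw [sq]
        exact h5.le.trans (Nat.mul_le_mul h6 h6)
      exact_mod_cast h7
    calc 2 * (n:ℝ) ^ 3 * (3/4) ^ (Nat.sqrt n / 2)
        ≤ 2 * ((2 * ((Nat.sqrt n / 2 + 1 : ℕ) : ℝ)) ^ 2) ^ 3 * (3/4) ^ (Nat.sqrt n / 2) := by gcongr
      _ = _ := by rw [pow_succ]; push_cast; ring
  have h5 := ((hk.const_mul 144).add (h1.const_mul 288)).add h4
  simpa [err4] using h5

theorem stmt4 (k : ℕ → ℕ)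
    (hk : Filter.Tendsto (fun n : ℕ => ((k n : ℝ))^2 / (n : ℝ)) Filter.atTop (nhds 0)) :
    Filter.Tendsto
      (fun n : ℕ => prob n (fun C =>
        (∀ x ∈ lenAtLeast n (k n) C, k n ≤ degreeIn C (lenAtLeast n (k n) C) x) ∧
        kCore n (k n) C = lenAtLeast n (k n) C))
      Filter.atTop (nhds 1) := by
  have herr := err4_tendsto k hk
  have hlow : Tendsto (fun n => 1 - err4 n (k n)) atTop (nhds 1) := by
    simpa using herr.const_sub 1
  have hdec : ∀ n : ℕ, ∀ E : ChordDiagram n → Prop, prob n E =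
      1 - ((Finset.univ.filter fun C => ¬ E C).card : ℝ) / M4 n := by
    intro n E
    have h0 : (0:ℝ) < M4 n := by exact_mod_cast M4_pos n
    have h1 := Finset.card_filter_add_card_filter_not
      (s := (Finset.univ : Finset (ChordDiagram n))) E
    rw [total4] at h1
    have h2 : ((Finset.univ.filter E).card : ℝ) +
      ((Finset.univ.filter fun C => ¬ E C).card : ℝ) = M4 n := by exact_mod_cast h1
    unfold prob
    rw [total4, eq_sub_iff_add_eq, ← add_div, h2, div_self h0.ne']
  have hsmall : ∀ᶠ n : ℕ in atTop, 90000 * (k n) ^ 2 ≤ n := by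
    have h1 := hk.eventually (gt_mem_nhds (show (0:ℝ) < 1/90000 by norm_num))
    filter_upwards [h1, eventually_gt_atTop 0] with n hn hn0
    have hn0' : (0:ℝ) < n := by exact_mod_cast hn0
    rw [div_lt_iff₀ hn0'] at hn
    have : (90000:ℝ) * (k n : ℝ) ^ 2 ≤ n := by linarith
    exact_mod_cast this
  refine tendsto_of_tendsto_of_tendsto_of_le_of_le' hlow tendsto_const_nhds ?_ ?_
  · filter_upwards [hsmall, eventually_ge_atTop 400] with n hn hn4
    have h0 : (0:ℝ) < M4 n := by exact_mod_cast M4_pos n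
    rw [hdec]
    apply sub_le_sub_left
    rw [div_le_iff₀ h0]
    refine le_trans ?_ (finite4 n (k n) hn4 hn)
    rw [Nat.cast_le]
    refine le_trans (le_of_eq ?_) (union4 n (k n))
    congr 1
    ext C
    simp only [mem_filter]
  · filter_upwards with n
    rw [hdec]
    exact sub_le_self _ (by positivity)
end
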